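/- Let Ω ⊂ ℂⁿ be a bounded domain and let ξ ∈ ∂Ω be a Dini-smooth boundary point. Then there exists a neighbourhood U of ξ such that for all p, q ∈ Ω ∩ U, the Kobayashi distance satisfies K_Ω(p,q) ≤ log(1 + 2|p−q| / √(δ_Ω(p) δ_Ω(q))). -/

import Mathlib

open Metric Set MeasureTheory Filter Topology

noncomputable section

variable {E : Type*} [NormedAddCommGroup E] [NormedSpace ℂ E]

/-- Distance from `x` to the boundary of `D`. -/
def bdist (D : Set E) (x : E) : ℝ := Metric.infDist x (frontier D)

/-- Distance from `x` to the boundary of `D` along the complex line `x + ℂ v`. -/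
def bdistDir (D : Set E) (x v : E) : ℝ :=
  Metric.infDist x (frontier D ∩ {w | ∃ c : ℂ, w = x + c • v})

/-- The infinitesimal Kobayashi (pseudo-)metric of `D ⊆ E`. -/
def kobMetric (D : Set E) (x v : E) : ℝ :=
  sInf { r : ℝ | ∃ (f : ℂ → E) (ξ : ℂ),
    DifferentiableOn ℂ f (ball (0:ℂ) 1) ∧ MapsTo f (ball (0:ℂ) 1) D ∧
    f 0 = x ∧ ξ • derivWithin f (ball (0:ℂ) 1) 0 = v ∧ r = ‖ξ‖ }

/-- `σ` is absolutely continuous on `[a,b]`, with a.e. derivative `g`. -/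
def IsACWithDeriv (σ g : ℝ → E) (a b : ℝ) : Prop :=
  IntervalIntegrable g volume a b ∧
  ∀ t ∈ Icc a b, σ t = σ a + ∫ s in a..t, g s

/-- The Kobayashi pseudo-distance of `D`, defined via lengths of absolutely
continuous curves (Venturini's description). -/
def kobDist (D : Set E) (x y : E) : ℝ :=
  sInf { r : ℝ | ∃ (a b : ℝ) (σ g : ℝ → E), a ≤ b ∧
    IsACWithDeriv σ g a b ∧ MapsTo σ (Icc a b) D ∧ σ a = x ∧ σ b = y ∧
    r = ∫ t in a..b, kobMetric D (σ t) (g t) }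

/-- Log-type convex domain, with explicit constants `C, ν > 0`. -/
def LogTypeConvexWith (D : Set E) (C ν : ℝ) : Prop :=
  IsOpen D ∧ D.Nonempty ∧ Bornology.IsBounded D ∧ Convex ℝ D ∧ 0 < C ∧ 0 < ν ∧
  ∀ z ∈ D, ∀ v : E, v ≠ 0 →
    bdistDir D z v ≤ C / |Real.log (bdist D z)| ^ (1 + ν)

/-- Log-type convex domain. -/
def LogTypeConvex (D : Set E) : Prop := ∃ C ν : ℝ, LogTypeConvexWith D C ν

/-- A `ℂ`-convex set: every nonempty intersection with a complex affine line is
connected and simply connected. -/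
def CConvex (D : Set E) : Prop :=
  ∀ z v : E, v ≠ 0 → (D ∩ {w | ∃ c : ℂ, w = z + c • v}).Nonempty →
    IsConnected (D ∩ {w | ∃ c : ℂ, w = z + c • v}) ∧
    SimplyConnectedSpace ↥(D ∩ {w | ∃ c : ℂ, w = z + c • v})

/-- Log-type `ℂ`-convex domain. -/
def LogTypeCConvex (D : Set E) : Prop :=
  IsOpen D ∧ D.Nonempty ∧ Bornology.IsBounded D ∧ CConvex D ∧
  ∃ C ν : ℝ, 0 < C ∧ 0 < ν ∧
    ∀ z ∈ D, ∀ v : E, v ≠ 0 →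
      bdistDir D z v ≤ C / |Real.log (bdist D z)| ^ (1 + ν)

/-- `σ : [a,b] → D` (with a.e. derivative `g`) is a `(λ,κ)`-almost geodesic for the
Kobayashi distance of `D`. -/
def AlmostGeodesicOn (D : Set E) (lam kap : ℝ) (σ g : ℝ → E) (a b : ℝ) : Prop :=
  MapsTo σ (Icc a b) D ∧ IsACWithDeriv σ g a b ∧
  (∀ s ∈ Icc a b, ∀ t ∈ Icc a b,
    (1 / lam) * |t - s| - kap ≤ kobDist D (σ s) (σ t) ∧
    kobDist D (σ s) (σ t) ≤ lam * |t - s| + kap) ∧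
  (∀ᵐ t ∂volume, t ∈ Icc a b → kobMetric D (σ t) (g t) ≤ lam)

/-- `σ : [a,b] → D` is a `C`-rough geodesic for the Kobayashi distance of `D`. -/
def RoughGeodesicOn (D : Set E) (C : ℝ) (σ : ℝ → E) (a b : ℝ) : Prop :=
  MapsTo σ (Icc a b) D ∧
  ∀ s ∈ Icc a b, ∀ t ∈ Icc a b,
    |t - s| - C ≤ kobDist D (σ s) (σ t) ∧ kobDist D (σ s) (σ t) ≤ |t - s| + C

/-- `ρ` is a `C¹` local defining function for `D` near `ξ` on the open set `W`. -/
def IsLocalDefiningFn (D : Set E) (ξ : E) (W : Set E) (ρ : E → ℝ) : Prop :=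
  IsOpen W ∧ ξ ∈ W ∧ ContDiffOn ℝ 1 ρ W ∧ (∀ x ∈ W, fderiv ℝ ρ x ≠ 0) ∧
  D ∩ W = {x ∈ W | ρ x < 0} ∧ frontier D ∩ W = {x ∈ W | ρ x = 0}

/-- `ξ` is a Dini-smooth boundary point of `D`: the boundary is `C¹` near `ξ` and the
unit normal admits a modulus of continuity `ω` satisfying the Dini condition. -/
def DiniSmoothBoundaryPoint (D : Set E) (ξ : E) : Prop :=
  ∃ (W : Set E) (ρ : E → ℝ) (ω : ℝ → ℝ),
    IsLocalDefiningFn D ξ W ρ ∧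
    (∀ t ∈ Icc (0:ℝ) 1, 0 ≤ ω t) ∧ MonotoneOn ω (Icc (0:ℝ) 1) ∧
    IntegrableOn (fun t => ω t / t) (Ioc (0:ℝ) 1) ∧
    ∀ x ∈ frontier D ∩ W, ∀ y ∈ frontier D ∩ W, ‖x - y‖ ≤ 1 →
      ‖(‖fderiv ℝ ρ x‖)⁻¹ • fderiv ℝ ρ x - (‖fderiv ℝ ρ y‖)⁻¹ • fderiv ℝ ρ y‖ ≤ ω ‖x - y‖

/-- `D` has `C^{1,ε}` boundary: near every boundary point there is a `C¹` defining
function whose differential is `ε`-Hölder. -/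
def HolderC1Boundary (D : Set E) (ε : ℝ) : Prop :=
  ∀ ξ ∈ frontier D, ∃ (W : Set E) (ρ : E → ℝ) (M : ℝ), 0 < M ∧
    IsLocalDefiningFn D ξ W ρ ∧
    ∀ x ∈ W, ∀ y ∈ W, ‖fderiv ℝ ρ x - fderiv ℝ ρ y‖ ≤ M * ‖x - y‖ ^ ε

/-- The complex affine tangent hyperplane of `∂D` at `x`, computed from a local
defining function `ρ`. -/
def complexTangentHyperplane (ρ : E → ℝ) (x : E) : Set E :=
  {w : E | fderiv ℝ ρ x (w - x) = 0 ∧ fderiv ℝ ρ x ((Complex.I : ℂ) • (w - x)) = 0}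

/-- The Gromov product of `x` and `y` with respect to the base point `o`, for the
Kobayashi distance of `D`. -/
def gromovProd (D : Set E) (o x y : E) : ℝ :=
  (kobDist D x o + kobDist D o y - kobDist D x y) / 2

end



section helper
variable {E : Type*} [NormedAddCommGroup E] [NormedSpace ℂ E]

lemma kobMetric_bddBelow (D : Set E) (x v : E) : BddBelow { r : ℝ | ∃ (f : ℂ → E) (ξ : ℂ),
    DifferentiableOn ℂ f (ball (0:ℂ) 1) ∧ MapsTo f (ball (0:ℂ) 1) D ∧
    f 0 = x ∧ ξ • derivWithin f (ball (0:ℂ) 1) 0 = v ∧ r = ‖ξ‖ } := by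
  refine ⟨0, ?_⟩
  rintro r ⟨f, ξ, -, -, -, -, rfl⟩
  exact norm_nonneg _

lemma kobMetric_nonneg (D : Set E) (x v : E) : 0 ≤ kobMetric D x v := by
  apply Real.sInf_nonneg
  rintro r ⟨f, ξ, -, -, -, -, rfl⟩
  exact norm_nonneg _

lemma kobMetric_le {D : Set E} {x v : E} (f : ℂ → E) (f' : E) (c : ℂ)
    (hf : DifferentiableOn ℂ f (ball (0:ℂ) 1)) (hm : MapsTo f (ball (0:ℂ) 1) D)
    (h0 : f 0 = x) (hd : HasDerivAt f f' 0) (hv : c • f' = v) :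
    kobMetric D x v ≤ ‖c‖ := by
  refine csInf_le (kobMetric_bddBelow D x v) ⟨f, c, hf, hm, h0, ?_, rfl⟩
  rw [derivWithin_of_isOpen isOpen_ball (by simp), hd.deriv, hv]

lemma kobMetric_neg_le (D : Set E) (x v : E) : kobMetric D x (-v) = kobMetric D x v := by
  unfold kobMetric
  congr 1
  ext r
  constructor
  · rintro ⟨f, c, h1, h2, h3, h4, h5⟩
    exact ⟨f, -c, h1, h2, h3, by rw [neg_smul, h4, neg_neg], by rw [norm_neg, h5]⟩
  · rintro ⟨f, c, h1, h2, h3, h4, h5⟩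
    exact ⟨f, -c, h1, h2, h3, by rw [neg_smul, h4], by rw [norm_neg, h5]⟩

/-- There is a path from `x` to `y` of Kobayashi length at most `L`. -/
def HasLen (D : Set E) (x y : E) (L : ℝ) : Prop :=
  ∃ (T : ℝ) (σ g : ℝ → E) (B : ℝ → ℝ), 0 ≤ T ∧ IsACWithDeriv σ g 0 T ∧
    MapsTo σ (Icc 0 T) D ∧ σ 0 = x ∧ σ T = y ∧ IntervalIntegrable B volume 0 T ∧
    (∀ t ∈ Icc 0 T, kobMetric D (σ t) (g t) ≤ B t) ∧ ∫ t in (0:ℝ)..T, B t ≤ L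

lemma HasLen.mono {D : Set E} {x y : E} {L L' : ℝ} (h : HasLen D x y L) (hL : L ≤ L') :
    HasLen D x y L' := by
  obtain ⟨T, σ, g, B, h1, h2, h3, h4, h5, h6, h7, h8⟩ := h
  exact ⟨T, σ, g, B, h1, h2, h3, h4, h5, h6, h7, h8.trans hL⟩

lemma HasLen.kobDist_le {D : Set E} {x y : E} {L : ℝ} (h : HasLen D x y L) :
    kobDist D x y ≤ L := by
  obtain ⟨T, σ, g, B, h1, h2, h3, h4, h5, h6, h7, h8⟩ := h
  have hb : kobDist D x y ≤ ∫ t in (0:ℝ)..T, kobMetric D (σ t) (g t) := by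
    refine csInf_le ⟨0, ?_⟩ ⟨0, T, σ, g, h1, h2, h3, h4, h5, rfl⟩
    rintro r ⟨a, b, σ, g, hab, -, -, -, -, rfl⟩
    exact intervalIntegral.integral_nonneg hab fun t _ => kobMetric_nonneg _ _ _
  refine hb.trans (le_trans ?_ h8)
  rw [intervalIntegral.integral_of_le h1, intervalIntegral.integral_of_le h1]
  apply integral_mono_of_nonneg
  · exact Eventually.of_forall fun t => kobMetric_nonneg _ _ _
  · exact h6.1
  · refine (ae_restrict_iff' measurableSet_Ioc).2 (Eventually.of_forall fun t ht => ?_)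
    exact h7 t ⟨ht.1.le, ht.2⟩

lemma HasLen.symm {D : Set E} {x y : E} {L : ℝ} (h : HasLen D x y L) :
    HasLen D y x L := by
  obtain ⟨T, σ, g, B, h1, ⟨h2, h2'⟩, h3, h4, h5, h6, h7, h8⟩ := h
  refine ⟨T, fun t => σ (T - t), fun t => - g (T - t), fun t => B (T - t), h1, ⟨?_, ?_⟩, ?_, ?_,
    ?_, ?_, ?_, ?_⟩
  · have := (h2.comp_sub_left T).symm
    have h := this.neg
    simp only [sub_self, sub_zero] at h
    exact h
  · intro t ht
    have e1 := h2' (T - t) ⟨by linarith [ht.2], by linarith [ht.1]⟩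
    have e2 := h2' T ⟨h1, le_rfl⟩
    simp only [intervalIntegral.integral_neg, intervalIntegral.integral_comp_sub_left, sub_zero]
    have e3 : (∫ s in (0:ℝ)..(T - t), g s) + ∫ s in (T-t)..T, g s = ∫ s in (0:ℝ)..T, g s := by
      apply intervalIntegral.integral_add_adjacent_intervals
      · apply h2.mono_set
        rw [uIcc_of_le h1, uIcc_of_le (by linarith [ht.2])]
        exact Icc_subset_Icc le_rfl (by linarith [ht.1])
      · apply h2.mono_set
        rw [uIcc_of_le h1, uIcc_of_le (by linarith [ht.1])]
        exact Icc_subset_Icc (by linarith [ht.2]) le_rfl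
    rw [e1, e2, ← e3]; abel
  · intro t ht; exact h3 ⟨by linarith [ht.2], by linarith [ht.1]⟩
  · simpa using h5
  · simpa using h4
  · simpa using (h6.comp_sub_left T).symm
  · intro t ht
    rw [kobMetric_neg_le]
    exact h7 _ ⟨by linarith [ht.2], by linarith [ht.1]⟩
  · simpa using h8

lemma glue_int {F : Type*} [NormedAddCommGroup F] [NormedSpace ℝ F] (f1 f2 : ℝ → F) (T S : ℝ)
    (hT : 0 ≤ T) (hS : 0 ≤ S) (h1 : IntervalIntegrable f1 volume 0 T)
    (h2 : IntervalIntegrable f2 volume 0 S) :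
    IntervalIntegrable (fun t => if t ≤ T then f1 t else f2 (t - T)) volume 0 (T + S) ∧
    (∀ t ∈ Icc 0 T, ∫ s in (0:ℝ)..t, (if s ≤ T then f1 s else f2 (s - T)) =
      ∫ s in (0:ℝ)..t, f1 s) ∧
    (∀ t ∈ Icc 0 S, ∫ s in (0:ℝ)..(T + t), (if s ≤ T then f1 s else f2 (s - T)) =
      (∫ s in (0:ℝ)..T, f1 s) + ∫ s in (0:ℝ)..t, f2 s) := by
  have a1 : IntervalIntegrable (fun t => if t ≤ T then f1 t else f2 (t - T)) volume 0 T := by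
    refine h1.congr ?_
    intro t ht
    rw [uIoc_of_le hT] at ht
    simp [ht.2]
  have h2' : IntervalIntegrable (fun t => f2 (t - T)) volume T (T + S) := by
    have := h2.comp_sub_right T
    simpa [add_comm] using this
  have a2 : IntervalIntegrable (fun t => if t ≤ T then f1 t else f2 (t - T)) volume T (T+S) := by
    refine h2'.congr ?_
    intro t ht
    rw [uIoc_of_le (by linarith)] at ht
    simp [ht.1]
  have b1 : ∀ t ∈ Icc 0 T, ∫ s in (0:ℝ)..t, (if s ≤ T then f1 s else f2 (s - T)) =
      ∫ s in (0:ℝ)..t, f1 s := by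
    intro t ht
    apply intervalIntegral.integral_congr_ae
    refine Eventually.of_forall fun s hs => ?_
    rw [uIoc_of_le ht.1] at hs
    simp [hs.2.trans ht.2]
  refine ⟨a1.trans a2, b1, ?_⟩
  intro t ht
  have a3 : IntervalIntegrable (fun t => if t ≤ T then f1 t else f2 (t - T)) volume T (T+t) := by
    apply a2.mono_set
    rw [uIcc_of_le (by linarith [ht.1]), uIcc_of_le (by linarith [ht.1])]
    exact Icc_subset_Icc le_rfl (by linarith [ht.2])
  rw [← intervalIntegral.integral_add_adjacent_intervals a1 a3, b1 T ⟨hT, le_rfl⟩]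
  congr 1
  have : ∫ s in T..(T+t), f2 (s - T) = ∫ s in (0:ℝ)..t, f2 s := by
    simp
  rw [← this]
  apply intervalIntegral.integral_congr_ae
  refine Eventually.of_forall fun s hs => ?_
  rw [uIoc_of_le (by linarith [ht.1])] at hs
  simp [hs.1]

lemma HasLen.trans {D : Set E} {x y z : E} {L L' : ℝ} (h : HasLen D x y L)
    (h' : HasLen D y z L') : HasLen D x z (L + L') := by
  obtain ⟨T, σ, g, B, h1, ⟨h2, h2'⟩, h3, h4, h5, h6, h7, h8⟩ := h
  obtain ⟨S, τ, k, C, i1, ⟨i2, i2'⟩, i3, i4, i5, i6, i7, i8⟩ := h'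
  obtain ⟨a1, a2, a3⟩ := glue_int g k T S h1 i1 h2 i2
  obtain ⟨b1, b2, b3⟩ := glue_int B C T S h1 i1 h6 i6
  refine ⟨T + S, fun t => if t ≤ T then σ t else τ (t - T),
    fun t => if t ≤ T then g t else k (t - T), fun t => if t ≤ T then B t else C (t - T),
    by linarith, ⟨a1, ?_⟩, ?_, ?_, ?_, b1, ?_, ?_⟩
  · intro t ht
    simp only [h1, if_true]
    by_cases hc : t ≤ T
    · rw [a2 t ⟨ht.1, hc⟩, if_pos hc]
      exact h2' t ⟨ht.1, hc⟩
    · rw [if_neg hc]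
      push Not at hc
      have hm : t - T ∈ Icc 0 S := ⟨by linarith, by linarith [ht.2]⟩
      have := a3 (t - T) hm
      rw [add_sub_cancel] at this
      rw [this, i2' _ hm, ← add_assoc, ← h2' T ⟨h1, le_rfl⟩, h5, i4]
  · intro t ht
    by_cases hc : t ≤ T
    · simp only [hc, if_true]
      exact h3 ⟨ht.1, hc⟩
    · simp only [hc, if_false]
      push Not at hc
      exact i3 ⟨by linarith, by linarith [ht.2]⟩
  · simp [h1, h4]
  · by_cases hc : T + S ≤ T
    · have : S = 0 := by linarith
      subst this
      simp only [add_zero, le_refl, if_true]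
      rw [h5, ← i4, i5]
    · simp [hc, i5]
  · intro t ht
    by_cases hc : t ≤ T
    · simp only [hc, if_true]
      exact h7 _ ⟨ht.1, hc⟩
    · simp only [hc, if_false]
      push Not at hc
      exact i7 _ ⟨by linarith, by linarith [ht.2]⟩
  · rw [b3 S ⟨i1, le_rfl⟩]
    linarith

lemma HasLen.of_C1 [CompleteSpace E] {D : Set E} {a b : ℝ} (hab : a ≤ b) (σ g : ℝ → E) (B : ℝ → ℝ)
    (hd : ∀ t ∈ Icc a b, HasDerivAt σ (g t) t) (hg : ContinuousOn g (Icc a b))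
    (hB : ContinuousOn B (Icc a b)) (hm : MapsTo σ (Icc a b) D)
    (hk : ∀ t ∈ Icc a b, kobMetric D (σ t) (g t) ≤ B t) :
    HasLen D (σ a) (σ b) (∫ t in a..b, B t) := by
  have hg' : IntervalIntegrable g volume a b := by
    apply ContinuousOn.intervalIntegrable; rwa [uIcc_of_le hab]
  have hB' : IntervalIntegrable B volume a b := by
    apply ContinuousOn.intervalIntegrable; rwa [uIcc_of_le hab]
  have hmem : ∀ t ∈ Icc 0 (b - a), t + a ∈ Icc a b := fun t ht =>
    ⟨by linarith [ht.1], by linarith [ht.2]⟩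
  refine ⟨b - a, fun t => σ (t + a), fun t => g (t + a), fun t => B (t + a), by linarith,
    ⟨?_, ?_⟩, fun t ht => hm (hmem t ht), by simp, by simp, ?_, fun t ht => hk _ (hmem t ht), ?_⟩
  · simpa using hg'.comp_add_right a
  · intro t ht
    simp only [intervalIntegral.integral_comp_add_right, zero_add]
    have := hmem t ht
    rw [intervalIntegral.integral_eq_sub_of_hasDerivAt (f := σ)]
    · abel
    · intro x hx
      rw [uIcc_of_le this.1] at hx
      exact hd x ⟨hx.1, hx.2.trans this.2⟩
    · apply hg'.mono_set
      rw [uIcc_of_le this.1, uIcc_of_le hab]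
      exact Icc_subset_Icc le_rfl this.2
  · simpa using hB'.comp_add_right a
  · simp

end helper


section disc

/-- The Moebius map from the unit disc onto `ball R R`, sending `0` to `s`. -/
noncomputable def mob (R s : ℝ) (z : ℂ) : ℂ :=
  R + R * ((z + ((s - R) / R : ℝ)) / (1 + ((s - R) / R : ℝ) * z))

lemma mob_aux {a : ℝ} (ha : |a| < 1) {z : ℂ} (hz : ‖z‖ < 1) :
    ‖z + a‖ < ‖1 + a * z‖ := by
  have h1 : ‖z + a‖ ^ 2 < ‖1 + a * z‖ ^ 2 := by
    rw [← Complex.normSq_eq_norm_sq, ← Complex.normSq_eq_norm_sq]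
    have hz2 : Complex.normSq z < 1 := by
      rw [Complex.normSq_eq_norm_sq]
      nlinarith [norm_nonneg z]
    rw [Complex.normSq_apply] at hz2
    have ha2 : a ^ 2 < 1 := by
      rw [← sq_abs]; nlinarith [abs_nonneg a]
    simp only [Complex.normSq_apply, Complex.add_re, Complex.ofReal_re, Complex.add_im,
      Complex.ofReal_im, Complex.one_re, Complex.mul_re, Complex.one_im, Complex.mul_im]
    nlinarith [mul_pos (sub_pos.2 hz2) (sub_pos.2 ha2)]
  exact lt_of_pow_lt_pow_left₀ 2 (norm_nonneg _) h1

lemma mob_spec {R s : ℝ} (hs : 0 < s) (hsR : s ≤ R) :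
    DifferentiableOn ℂ (mob R s) (ball 0 1) ∧ MapsTo (mob R s) (ball 0 1) (ball (R:ℂ) R) ∧
    mob R s 0 = s ∧ HasDerivAt (mob R s) ((s * (2 * R - s) / R : ℝ) : ℂ) 0 := by
  have hR : 0 < R := hs.trans_le hsR
  set a : ℝ := (s - R) / R with ha
  have ha1 : |a| < 1 := by
    rw [abs_lt]; constructor
    · rw [ha, lt_div_iff₀ hR]; linarith
    · rw [ha, div_lt_iff₀ hR]; linarith
  have hne : ∀ z : ℂ, ‖z‖ < 1 → (1 + a * z : ℂ) ≠ 0 := by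
    intro z hz h
    have := mob_aux ha1 hz
    rw [h, norm_zero] at this
    exact absurd this (not_lt.2 (norm_nonneg _))
  have hd : ∀ z : ℂ, ‖z‖ < 1 → HasDerivAt (mob R s)
      (R * ((1 * (1 + a * z) - (z + a) * (a * 1)) / (1 + a * z) ^ 2)) z := by
    intro z hz
    unfold mob
    refine ((((hasDerivAt_id z).add_const _).div
      (((hasDerivAt_id z).const_mul (a:ℂ)).const_add 1) (hne z hz)).const_mul (R:ℂ)).const_add _
  refine ⟨fun z hz => (hd z (by simpa using hz)).differentiableAt.differentiableWithinAt, ?_, ?_, ?_⟩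
  · intro z hz
    have hz : ‖z‖ < 1 := by simpa using hz
    have h1 := mob_aux ha1 hz
    rw [mem_ball, dist_eq_norm]
    unfold mob
    rw [← ha, add_sub_cancel_left, norm_mul, norm_div, Complex.norm_real, Real.norm_eq_abs,
      abs_of_pos hR]
    have : ‖z + a‖ / ‖1 + a * z‖ < 1 := by
      rw [div_lt_one]; exact h1
      exact norm_pos_iff.2 (hne z hz)
    nlinarith
  · unfold mob
    have : (R:ℂ) ≠ 0 := by exact_mod_cast hR.ne'
    push_cast
    simp only [mul_zero, add_zero, zero_add, div_one]
    field_simp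
    ring
  · have := hd 0 (by simp)
    convert this using 1
    have : (R:ℂ) ≠ 0 := by exact_mod_cast hR.ne'
    rw [ha]
    push_cast
    simp only [mul_zero, add_zero, zero_add, div_one, one_pow, mul_one]
    field_simp
    ring

variable {E : Type*} [NormedAddCommGroup E] [NormedSpace ℂ E]

lemma kob_of_disc {D : Set E} (G : ℂ → E) (G' : E) {R s : ℝ} (hs : 0 < s) (hsR : s ≤ R)
    (hG : DifferentiableOn ℂ G (ball (R:ℂ) R)) (hm : MapsTo G (ball (R:ℂ) R) D)
    (hd : HasDerivAt G G' (s:ℂ)) :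
    kobMetric D (G s) G' ≤ 1 / (2 * s) + 1 / (2 * R) := by
  obtain ⟨m1, m2, m3, m4⟩ := mob_spec hs hsR
  have hR : 0 < R := hs.trans_le hsR
  have hpos : 0 < s * (2 * R - s) / R := by
    apply div_pos _ hR
    apply mul_pos hs; linarith
  rw [← m3] at hd
  have := kobMetric_le (D := D) (x := G s) (v := G') (G ∘ mob R s)
    (((s * (2 * R - s) / R : ℝ) : ℂ) • G') (((s * (2 * R - s) / R : ℝ)⁻¹ : ℝ) : ℂ)
    (hG.comp m1 m2) (hm.comp m2) (by simp [m3]) (hd.scomp (0:ℂ) m4) (by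
      rw [smul_smul, ← Complex.ofReal_mul, inv_mul_cancel₀ hpos.ne']; simp)
  refine this.trans ?_
  rw [Complex.norm_real, Real.norm_eq_abs, abs_of_pos (inv_pos.2 hpos)]
  have h2 : 0 < 2 * R - s := by linarith
  have : (s * (2 * R - s) / R)⁻¹ = 1 / (2 * s) + 1 / (2 * (2 * R - s)) := by
    field_simp
    ring
  rw [this]
  gcongr
  linarith

lemma kob_of_ball {D : Set E} {x v : E} {r : ℝ} (hr : 0 < r) (hD : ball x r ⊆ D) :
    kobMetric D x v ≤ ‖v‖ / r := by
  by_cases hv : v = 0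
  · have hx : x ∈ D := hD (mem_ball_self hr)
    have := kobMetric_le (D := D) (x := x) (v := v) (fun _ => x) 0 0
      (differentiableOn_const _) (fun _ _ => hx) rfl (hasDerivAt_const _ _) (by simp [hv])
    simpa [hv] using this
  have hv' : 0 < ‖v‖ := norm_pos_iff.2 hv
  have hd : ∀ z : ℂ, HasDerivAt (fun z : ℂ => x + z • ((r / ‖v‖ : ℝ) : ℂ) • v)
      ((1:ℂ) • ((r / ‖v‖ : ℝ) : ℂ) • v) z := fun z =>
    ((hasDerivAt_id z).smul_const _).const_add x
  have := kobMetric_le (D := D) (x := x) (v := v) _ _ ((‖v‖ / r : ℝ) : ℂ)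
    (fun z _ => (hd z).differentiableAt.differentiableWithinAt) (fun z hz => ?_) (by simp)
    (hd 0) ?_
  · rwa [Complex.norm_real, Real.norm_eq_abs, abs_of_pos (by positivity)] at this
  · apply hD
    have hz : ‖z‖ < 1 := by simpa using hz
    rw [mem_ball, dist_eq_norm, add_sub_cancel_left, norm_smul, norm_smul, Complex.norm_real,
      Real.norm_eq_abs, abs_of_pos (by positivity), div_mul_cancel₀ _ hv'.ne']
    nlinarith
  · rw [one_smul, smul_smul, ← Complex.ofReal_mul]
    have : ‖v‖ / r * (r / ‖v‖) = 1 := by field_simp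
    rw [this]; simp

end disc

section horiz
variable {E : Type*} [NormedAddCommGroup E] [InnerProductSpace ℂ E]

/-- horizontal estimate. `x + w ∈ D` as soon as `‖w‖ < 12 T` and `Re ⟨n,w⟩ > - s`. -/
lemma kob_horiz {D : Set E} {x v n : E} {T s : ℝ} (hs : 0 < s) (hsT : s ≤ T) (hn : ‖n‖ = 1)
    (hD : ∀ w : E, ‖w‖ < 12 * T → -s < (inner ℂ n w).re → x + w ∈ D) :
    kobMetric D x v ≤ ‖v‖ / (9 / 5 * s) := by
  have hT : 0 < T := hs.trans_le hsT
  by_cases hv : v = 0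
  · have hx : x ∈ D := by
      have := hD 0 (by simpa using hT) (by simpa using hs)
      simpa using this
    have := kobMetric_le (D := D) (x := x) (v := v) (fun _ => x) 0 0
      (differentiableOn_const _) (fun _ _ => hx) rfl (hasDerivAt_const _ _) (by simp [hv])
    simpa [hv] using this
  have hv' : 0 < ‖v‖ := norm_pos_iff.2 hv
  obtain ⟨m1, m2, m3, m4⟩ := mob_spec (R := 5 * T) hs (by linarith)
  set μ : ℝ := s * (2 * (5 * T) - s) / (5 * T) with hμ
  have hμ1 : 9 / 5 * s ≤ μ := by
    rw [hμ, le_div_iff₀ (by positivity)]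
    nlinarith
  have hμ2 : μ ≤ 2 * T := by
    rw [hμ, div_le_iff₀ (by positivity)]
    nlinarith
  have hμ0 : 0 < μ := by linarith
  set α : ℂ := inner ℂ n v with hα
  set τ : E := v - α • n with hτ
  have hnn : inner ℂ n n = (1:ℂ) := by
    rw [inner_self_eq_norm_sq_to_K, hn]; simp
  have hnτ : inner ℂ n τ = (0:ℂ) := by
    rw [hτ, inner_sub_right, inner_smul_right, hnn, ← hα]; simp
  have hαv : ‖α‖ ≤ ‖v‖ := by
    have := norm_inner_le_norm (𝕜 := ℂ) n v
    rwa [hn, one_mul] at this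
  have hτv : ‖τ‖ ≤ ‖v‖ := by
    have h1 : inner ℂ (α • n) τ = (0:ℂ) := by rw [inner_smul_left, hnτ, mul_zero]
    have h2 := norm_add_sq_eq_norm_sq_add_norm_sq_of_inner_eq_zero (𝕜 := ℂ) _ _ h1
    have h3 : α • n + τ = v := by rw [hτ]; abel
    rw [h3] at h2
    nlinarith [norm_nonneg τ, norm_nonneg v, norm_nonneg (α • n)]
  set lam : ℂ := α / ‖v‖ with hlam
  have hlam1 : ‖lam‖ ≤ 1 := by
    rw [hlam, norm_div, Complex.norm_real, norm_norm, div_le_one hv']; exact hαv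
  have hlz : ∀ z : ℂ, ‖z‖ < 1 → lam * z ∈ ball (0:ℂ) 1 := by
    intro z hz
    rw [mem_ball_zero_iff, norm_mul]
    nlinarith [norm_nonneg z, norm_nonneg lam]
  set τ' : E := ((μ / ‖v‖ : ℝ) : ℂ) • τ with hτ'
  have hτ'n : ‖τ'‖ ≤ μ := by
    rw [hτ', norm_smul, Complex.norm_real, Real.norm_eq_abs, abs_of_pos (by positivity),
      div_mul_eq_mul_div, div_le_iff₀ hv']
    gcongr
  let f : ℂ → E := fun z => x + ((mob (5 * T) s (lam * z) - s) • n + z • τ')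
  have hfd : DifferentiableOn ℂ f (ball 0 1) := by
    have : DifferentiableOn ℂ (fun z : ℂ => mob (5 * T) s (lam * z)) (ball 0 1) := by
      apply m1.comp (differentiableOn_id.const_mul lam)
      intro z hz; exact hlz z (by simpa using hz)
    exact ((((this.sub_const _)).smul_const n).add (differentiableOn_id.smul_const τ')).const_add x
  have hf0 : f 0 = x := by simp [f, m3]
  have hfd0 : HasDerivAt f (((μ:ℂ) * lam) • n + (1:ℂ) • τ') 0 := by
    have h1 : HasDerivAt (fun z : ℂ => lam * z) lam 0 := by
      simpa using (hasDerivAt_id (0:ℂ)).const_mul lam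
    have h2 : HasDerivAt (fun z : ℂ => mob (5 * T) s (lam * z)) ((μ:ℂ) * lam) 0 := by
      have m4' : HasDerivAt (mob (5 * T) s) (μ:ℂ) (lam * 0) := by simpa using m4
      exact m4'.comp (0:ℂ) h1
    exact (((h2.sub_const _).smul_const n).add ((hasDerivAt_id (0:ℂ)).smul_const τ')).const_add x
  have hfm : MapsTo f (ball 0 1) D := by
    intro z hz
    have hz : ‖z‖ < 1 := by simpa using hz
    have hm := m2 (hlz z hz)
    rw [mem_ball, dist_eq_norm] at hm
    set M := mob (5 * T) s (lam * z)
    apply hD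
    · have h1 : ‖M - s‖ < 10 * T := by
        have h3 : ‖((5 * T : ℝ) : ℂ) - s‖ ≤ 5 * T := by
          rw [← Complex.ofReal_sub, Complex.norm_real, Real.norm_eq_abs, abs_of_nonneg (by linarith)]
          linarith
        have := norm_add_le (M - ((5 * T : ℝ) : ℂ)) (((5 * T : ℝ) : ℂ) - s)
        rw [sub_add_sub_cancel] at this
        linarith
      have h2 : ‖z • τ'‖ ≤ 2 * T := by
        rw [norm_smul]
        nlinarith [norm_nonneg z, norm_nonneg τ']
      have := norm_add_le ((M - s) • n) (z • τ')
      rw [norm_smul, hn, mul_one] at this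
      linarith
    · have h4 : inner ℂ n τ' = (0:ℂ) := by rw [hτ', inner_smul_right, hnτ, mul_zero]
      rw [inner_add_right, inner_smul_right, inner_smul_right, hnn, h4, mul_one, mul_zero, add_zero]
      have := (Complex.abs_re_le_norm (M - ((5 * T : ℝ) : ℂ))).trans_lt hm
      rw [abs_lt] at this
      simp only [Complex.sub_re, Complex.ofReal_re] at this ⊢
      linarith [this.1]
  have := kobMetric_le (v := v) f _ ((‖v‖ / μ : ℝ) : ℂ) hfd hfm hf0 hfd0 (by
    have hvc : (‖v‖ : ℂ) ≠ 0 := by exact_mod_cast hv'.ne'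
    have hμc : (μ : ℂ) ≠ 0 := by exact_mod_cast hμ0.ne'
    have e1 : ((‖v‖ / μ : ℝ) : ℂ) * ((μ:ℂ) * lam) = α := by
      rw [hlam]; push_cast; field_simp
    have e2 : ((‖v‖ / μ : ℝ) : ℂ) * ((μ / ‖v‖ : ℝ) : ℂ) = 1 := by
      push_cast; field_simp
    rw [one_smul, smul_add, smul_smul, e1, hτ', smul_smul, e2, one_smul, hτ]
    abel)
  refine this.trans ?_
  rw [Complex.norm_real, Real.norm_eq_abs, abs_of_pos (by positivity)]
  gcongr

end horiz


section planar

/-- The auxiliary holomorphic function. -/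
noncomputable def uu (ω : ℝ → ℝ) (A : ℝ) (ζ : ℂ) : ℂ :=
  ∫ t in Ioc (0:ℝ) A, ((ω t / t : ℝ) : ℂ) * (ζ / (t + ζ))

noncomputable def hh (ω : ℝ → ℝ) (A : ℝ) (ζ : ℂ) : ℂ := ζ * (1 - 25 * uu ω A ζ)

lemma norm_ge_of_re {t : ℝ} (ht : 0 < t) {ζ : ℂ} (hζ : 0 < ζ.re) :
    ‖ζ‖ ≤ ‖(t:ℂ) + ζ‖ ∧ t ≤ ‖(t:ℂ) + ζ‖ ∧ ζ.re ≤ ‖(t:ℂ) + ζ‖ ∧ (t:ℂ) + ζ ≠ 0 := by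
  have h3 : t + ζ.re ≤ ‖(t:ℂ) + ζ‖ := by
    have := Complex.re_le_norm ((t:ℂ) + ζ)
    simpa using this
  refine ⟨?_, by linarith, by linarith, ?_⟩
  · apply le_of_sq_le_sq _ (norm_nonneg _)
    rw [← Complex.normSq_eq_norm_sq, ← Complex.normSq_eq_norm_sq, Complex.normSq_apply,
      Complex.normSq_apply]
    simp only [Complex.add_re, Complex.ofReal_re, Complex.add_im, Complex.ofReal_im]
    nlinarith
  · rw [← norm_pos_iff]; linarith

variable {ω : ℝ → ℝ} {A : ℝ}

lemma om_nonneg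
    (hA1 : A ≤ 1)
    (h0 : ∀ t ∈ Icc (0:ℝ) 1, 0 ≤ ω t)
    {t : ℝ} (ht : t ∈ Ioc 0 A) : 0 ≤ ω t / t :=
  div_nonneg (h0 t ⟨ht.1.le, ht.2.trans hA1⟩) ht.1.le

lemma uu_bdd
    (hA1 : A ≤ 1)
    (h0 : ∀ t ∈ Icc (0:ℝ) 1, 0 ≤ ω t)
    (hintg : IntegrableOn (fun t => ω t / t) (Ioc (0:ℝ) A))
    {ζ : ℂ} (hζ : 0 < ζ.re) :
    IntegrableOn (fun t : ℝ => ((ω t / t : ℝ) : ℂ) * (ζ / (t + ζ))) (Ioc (0:ℝ) A) ∧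
    (∀ t ∈ Ioc 0 A, ‖((ω t / t : ℝ) : ℂ) * (ζ / (t + ζ))‖ ≤ ω t / t) := by
  have hb : ∀ t ∈ Ioc 0 A, ‖((ω t / t : ℝ) : ℂ) * (ζ / (t + ζ))‖ ≤ ω t / t := by
    intro t ht
    obtain ⟨n1, n2, n3, n4⟩ := norm_ge_of_re ht.1 hζ
    have h1 := om_nonneg hA1 h0 ht
    rw [norm_mul, Complex.norm_real, Real.norm_eq_abs, abs_of_nonneg h1, norm_div]
    have : ‖ζ‖ / ‖(t:ℂ) + ζ‖ ≤ 1 := div_le_one_of_le₀ n1 (norm_nonneg _)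
    nlinarith
  refine ⟨Integrable.mono' hintg ?_ ?_, hb⟩
  · apply AEStronglyMeasurable.mul
    · exact Complex.continuous_ofReal.comp_aestronglyMeasurable hintg.aestronglyMeasurable
    · apply ContinuousOn.aestronglyMeasurable _ measurableSet_Ioc
      intro t ht
      refine ContinuousAt.continuousWithinAt ?_
      apply ContinuousAt.div (by fun_prop) (by fun_prop)
      exact (norm_ge_of_re ht.1 hζ).2.2.2
  · exact (ae_restrict_iff' measurableSet_Ioc).2 (Eventually.of_forall hb)

lemma uu_norm
    (hA1 : A ≤ 1)
    (h0 : ∀ t ∈ Icc (0:ℝ) 1, 0 ≤ ω t)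
    (hintg : IntegrableOn (fun t => ω t / t) (Ioc (0:ℝ) A))
    {ζ : ℂ} (hζ : 0 < ζ.re) : ‖uu ω A ζ‖ ≤ ∫ t in Ioc (0:ℝ) A, ω t / t := by
  obtain ⟨-, h2⟩ := uu_bdd hA1 h0 hintg hζ
  exact norm_integral_le_of_norm_le hintg
    ((ae_restrict_iff' measurableSet_Ioc).2 (Eventually.of_forall h2))

lemma uu_real
    (hA1 : A ≤ 1)
    (h0 : ∀ t ∈ Icc (0:ℝ) 1, 0 ≤ ω t)
    {s : ℝ} (hs : 0 < s) : ∃ r : ℝ, uu ω A s = r ∧ 0 ≤ r := by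
  refine ⟨∫ t in Ioc (0:ℝ) A, (ω t / t) * (s / (t + s)), ?_, ?_⟩
  · unfold uu
    rw [← integral_complex_ofReal]
    congr 1
    ext t
    push_cast
    rfl
  · apply setIntegral_nonneg measurableSet_Ioc
    intro t ht
    have h1 := om_nonneg hA1 h0 ht
    have := ht.1
    positivity

lemma uu_diff
    (hA1 : A ≤ 1)
    (h0 : ∀ t ∈ Icc (0:ℝ) 1, 0 ≤ ω t)
    (hintg : IntegrableOn (fun t => ω t / t) (Ioc (0:ℝ) A))
    {ζ : ℂ} (hζ : 0 < ζ.re) : DifferentiableAt ℂ (uu ω A) ζ := by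
  have hball : ∀ z ∈ ball ζ (ζ.re / 2), ζ.re / 2 < z.re := by
    intro z hz
    rw [mem_ball, dist_eq_norm] at hz
    have := (Complex.abs_re_le_norm (z - ζ)).trans_lt hz
    rw [abs_lt, Complex.sub_re] at this
    linarith [this.1]
  have key := hasDerivAt_integral_of_dominated_loc_of_deriv_le (𝕜 := ℂ)
    (μ := volume.restrict (Ioc (0:ℝ) A)) (s := ball ζ (ζ.re / 2)) (x₀ := ζ)
    (F := fun z t => ((ω t / t : ℝ) : ℂ) * (z / (t + z)))
    (F' := fun z t => ((ω t / t : ℝ) : ℂ) * ((1 * (t + z) - z * 1) / (t + z) ^ 2))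
    (bound := fun t => (ω t / t) * (2 / ζ.re))
    (ball_mem_nhds _ (by linarith)) ?_ (uu_bdd hA1 h0 hintg hζ).1 ?_ ?_ ?_ ?_
  · exact key.2.differentiableAt
  · filter_upwards [ball_mem_nhds ζ (show 0 < ζ.re / 2 by linarith)] with z hz
    exact (uu_bdd hA1 h0 hintg (by linarith [hball z hz])).1.aestronglyMeasurable
  · apply AEStronglyMeasurable.mul
    · exact Complex.continuous_ofReal.comp_aestronglyMeasurable hintg.aestronglyMeasurable
    · apply ContinuousOn.aestronglyMeasurable _ measurableSet_Ioc
      intro t ht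
      refine ContinuousAt.continuousWithinAt ?_
      apply ContinuousAt.div (by fun_prop) (by fun_prop)
      exact pow_ne_zero _ (norm_ge_of_re ht.1 hζ).2.2.2
  · refine (ae_restrict_iff' measurableSet_Ioc).2 (Eventually.of_forall fun t ht z hz => ?_)
    have hz' := hball z hz
    obtain ⟨n1, n2, n3, n4⟩ := norm_ge_of_re ht.1 (show 0 < z.re by linarith)
    have h1 := om_nonneg hA1 h0 ht
    rw [norm_mul, Complex.norm_real, Real.norm_eq_abs, abs_of_nonneg h1]
    apply mul_le_mul_of_nonneg_left _ h1
    have hN : 0 < ‖(t:ℂ) + z‖ := norm_pos_iff.2 n4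
    have : (1 * ((t:ℂ) + z) - z * 1) = t := by ring
    rw [this, norm_div, norm_pow, Complex.norm_real, Real.norm_eq_abs, abs_of_pos ht.1,
      div_le_div_iff₀ (by positivity) hζ]
    nlinarith
  · exact hintg.mul_const _
  · refine (ae_restrict_iff' measurableSet_Ioc).2 (Eventually.of_forall fun t ht z hz => ?_)
    have hz' := hball z hz
    obtain ⟨n1, n2, n3, n4⟩ := norm_ge_of_re ht.1 (show 0 < z.re by linarith)
    exact ((hasDerivAt_id z).div ((hasDerivAt_id z).const_add (t:ℂ)) n4).const_mul _

lemma om_small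
    (hA1 : A ≤ 1)
    (h0 : ∀ t ∈ Icc (0:ℝ) 1, 0 ≤ ω t)
    (hmono : MonotoneOn ω (Icc (0:ℝ) 1))
    (hintg : IntegrableOn (fun t => ω t / t) (Ioc (0:ℝ) A))
    {s : ℝ} (hs : 0 < s) (hsA : 2 * s ≤ A) :
    ω s ≤ 2 * ∫ t in Ioc (0:ℝ) A, ω t / t := by
  have hsub : Ioc s (2 * s) ⊆ Ioc 0 A := fun t ht => ⟨hs.trans ht.1, ht.2.trans hsA⟩
  have h1 : ∫ t in Ioc s (2 * s), ω t / t ≤ ∫ t in Ioc (0:ℝ) A, ω t / t := by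
    apply setIntegral_mono_set hintg
    · exact (ae_restrict_iff' measurableSet_Ioc).2
        (Eventually.of_forall fun t ht => om_nonneg hA1 h0 ht)
    · exact hsub.eventuallyLE
  have h2 : ∫ t in Ioc s (2 * s), ω s / (2 * s) ≤ ∫ t in Ioc s (2 * s), ω t / t := by
    apply setIntegral_mono_on
    · simp
    · exact hintg.mono_set hsub
    · exact measurableSet_Ioc
    · intro t ht
      have := h0 s ⟨hs.le, by linarith⟩
      have h3 : ω s ≤ ω t := hmono ⟨hs.le, by linarith⟩ ⟨(hs.trans ht.1).le, by linarith [ht.2]⟩ ht.1.le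
      have := ht.2
      have := hs.trans ht.1
      gcongr
      linarith
  have h3 : ∫ t in Ioc s (2 * s), ω s / (2 * s) = ω s / 2 := by
    rw [setIntegral_const]
    simp only [measureReal_def, Real.volume_Ioc, smul_eq_mul]
    rw [ENNReal.toReal_ofReal (by linarith)]
    field_simp
    ring
  linarith

lemma uu_im
    (hA1 : A ≤ 1)
    (h0 : ∀ t ∈ Icc (0:ℝ) 1, 0 ≤ ω t)
    (hmono : MonotoneOn ω (Icc (0:ℝ) 1))
    (hintg : IntegrableOn (fun t => ω t / t) (Ioc (0:ℝ) A))
    {ζ : ℂ} (hζ : 0 < ζ.re) (hζA : 4 * ‖ζ‖ ≤ A) :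
    ζ.im ^ 2 * (2 / 25 * ω (2 * ‖ζ‖) / ‖ζ‖) ≤ ζ.im * (uu ω A ζ).im := by
  set s := ‖ζ‖ with hs
  have hs0 : 0 < s := norm_pos_iff.2 (by rintro rfl; simp at hζ)
  obtain ⟨i1, i2⟩ := uu_bdd hA1 h0 hintg hζ
  have e1 : (uu ω A ζ).im = ∫ t in Ioc (0:ℝ) A, (((ω t / t : ℝ) : ℂ) * (ζ / (t + ζ))).im :=
    (integral_im i1).symm
  have e2 : ∀ t ∈ Ioc 0 A, ζ.im * (((ω t / t : ℝ) : ℂ) * (ζ / (t + ζ))).im =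
      ω t * (ζ.im ^ 2 / ‖(t:ℂ) + ζ‖ ^ 2) := by
    intro t ht
    obtain ⟨n1, n2, n3, n4⟩ := norm_ge_of_re ht.1 hζ
    have hN : 0 < ‖(t:ℂ) + ζ‖ := norm_pos_iff.2 n4
    have ht0 := ht.1
    rw [Complex.im_ofReal_mul, Complex.div_im, Complex.normSq_eq_norm_sq]
    simp only [Complex.add_re, Complex.ofReal_re, Complex.add_im, Complex.ofReal_im]
    field_simp
    ring
  rw [e1, ← integral_const_mul]
  have hsub : Ioc (2 * s) (4 * s) ⊆ Ioc 0 A := fun t ht =>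
    ⟨by linarith [ht.1], ht.2.trans hζA⟩
  have i3 : IntegrableOn (fun t : ℝ => ζ.im * (((ω t / t : ℝ) : ℂ) * (ζ / (t + ζ))).im)
      (Ioc (0:ℝ) A) := i1.im.const_mul _
  have h1 : ∫ t in Ioc (2 * s) (4 * s), ζ.im * (((ω t / t : ℝ) : ℂ) * (ζ / (t + ζ))).im ≤
      ∫ t in Ioc (0:ℝ) A, ζ.im * (((ω t / t : ℝ) : ℂ) * (ζ / (t + ζ))).im := by
    apply setIntegral_mono_set i3
    · refine (ae_restrict_iff' measurableSet_Ioc).2 (Eventually.of_forall fun t ht => ?_)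
      have := h0 t ⟨ht.1.le, ht.2.trans hA1⟩
      change (0:ℝ) ≤ ζ.im * (((ω t / t : ℝ) : ℂ) * (ζ / (t + ζ))).im
      rw [e2 t ht]
      positivity
    · exact hsub.eventuallyLE
  have h2 : ∫ t in Ioc (2 * s) (4 * s), ω (2 * s) * (ζ.im ^ 2 / (5 * s) ^ 2) ≤
      ∫ t in Ioc (2 * s) (4 * s), ζ.im * (((ω t / t : ℝ) : ℂ) * (ζ / (t + ζ))).im := by
    apply setIntegral_mono_on
    · exact integrableOn_const (by simp) enorm_ne_top
    · exact i3.mono_set hsub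
    · exact measurableSet_Ioc
    · intro t ht
      rw [e2 t (hsub ht)]
      have ht0 : 0 < t := by linarith [ht.1]
      obtain ⟨n1, n2, n3, n4⟩ := norm_ge_of_re ht0 hζ
      have hN : 0 < ‖(t:ℂ) + ζ‖ := norm_pos_iff.2 n4
      have hN5 : ‖(t:ℂ) + ζ‖ ≤ 5 * s := by
        have := norm_add_le (t:ℂ) ζ
        rw [Complex.norm_real, Real.norm_eq_abs, abs_of_pos ht0] at this
        linarith [ht.2]
      have h4 := h0 (2 * s) ⟨by linarith, by linarith⟩
      have h3 : ω (2 * s) ≤ ω t := hmono ⟨by linarith, by linarith⟩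
        ⟨ht0.le, by linarith [ht.2]⟩ ht.1.le
      have h5 := h4.trans h3
      gcongr
  have h3 : ∫ t in Ioc (2 * s) (4 * s), ω (2 * s) * (ζ.im ^ 2 / (5 * s) ^ 2) =
      ζ.im ^ 2 * (2 / 25 * ω (2 * s) / s) := by
    rw [setIntegral_const]
    simp only [measureReal_def, Real.volume_Ioc, smul_eq_mul]
    rw [ENNReal.toReal_ofReal (by linarith)]
    field_simp
    ring
  linarith

lemma hh_cone
    (hA1 : A ≤ 1)
    (h0 : ∀ t ∈ Icc (0:ℝ) 1, 0 ≤ ω t)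
    (hmono : MonotoneOn ω (Icc (0:ℝ) 1))
    (hintg : IntegrableOn (fun t => ω t / t) (Ioc (0:ℝ) A))
    (hI : ∫ t in Ioc (0:ℝ) A, ω t / t ≤ 1 / 2500) {R : ℝ} (hRA : 8 * R ≤ A)
    {ζ : ℂ} (hζ : ζ ∈ ball (R:ℂ) R) :
    0 < ζ.re ∧ ‖hh ω A ζ‖ < 4 * R ∧
    ω ‖hh ω A ζ‖ * ‖hh ω A ζ‖ < (hh ω A ζ).re := by
  rw [mem_ball, dist_eq_norm] at hζ
  have hre : 0 < ζ.re := by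
    have := (Complex.abs_re_le_norm (ζ - R)).trans_lt hζ
    rw [abs_lt, Complex.sub_re, Complex.ofReal_re] at this
    linarith [this.1]
  have hR : 0 < R := lt_of_le_of_lt (norm_nonneg _) hζ
  have hs2R : ‖ζ‖ < 2 * R := by
    have := norm_add_le (ζ - R) (R:ℂ)
    rw [sub_add_cancel, Complex.norm_real, Real.norm_eq_abs, abs_of_pos hR] at this
    linarith
  have hu := uu_norm hA1 h0 hintg hre
  have him := uu_im hA1 h0 hmono hintg hre (by linarith)
  set s := ‖ζ‖ with hs
  have hs0 : 0 < s := norm_pos_iff.2 (by rintro rfl; simp at hre)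
  have hom := om_small hA1 h0 hmono hintg (s := 2 * s) (by linarith) (by linarith)
  have hom0 := h0 (2 * s) ⟨by linarith, by linarith⟩
  set u := uu ω A ζ with hu'
  have hun : ‖(1:ℂ) - 25 * u‖ ≤ 2 := by
    have := norm_sub_le (1:ℂ) (25 * u)
    rw [norm_mul, norm_one] at this
    norm_num at this
    linarith
  have hn : ‖hh ω A ζ‖ ≤ 2 * s := by
    unfold hh
    rw [norm_mul, ← hs, ← hu']
    nlinarith
  have hure : u.re ≤ 1 / 50 := by
    have := Complex.re_le_norm u
    linarith
  have hle : ω ‖hh ω A ζ‖ ≤ ω (2 * s) :=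
    hmono ⟨norm_nonneg _, by linarith⟩ ⟨by linarith, by linarith⟩ hn
  refine ⟨hre, by linarith, ?_⟩
  have hre_h : (hh ω A ζ).re = ζ.re * (1 - 25 * u.re) + 25 * (ζ.im * u.im) := by
    unfold hh
    rw [← hu']
    simp [Complex.mul_re]
    ring
  have h1 : ω ‖hh ω A ζ‖ * ‖hh ω A ζ‖ ≤ ω (2 * s) * (2 * s) := by
    gcongr
  refine h1.trans_lt ?_
  rw [hre_h]
  have hsq : ζ.im ^ 2 = s ^ 2 - ζ.re ^ 2 := by
    rw [hs, ← Complex.normSq_eq_norm_sq, Complex.normSq_apply]; ring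
  have hXs : ζ.re ≤ s := Complex.re_le_norm ζ
  have h2 : ζ.im ^ 2 * (2 / 25 * ω (2 * s) / s) ≥ 2 / 25 * ω (2 * s) * (s - ζ.re) := by
    rw [hsq, ge_iff_le, ← mul_div_assoc, le_div_iff₀ hs0]
    have : 0 ≤ ω (2 * s) * (ζ.re * (s - ζ.re)) := by
      apply mul_nonneg hom0; apply mul_nonneg hre.le; linarith
    nlinarith
  have h3 : ω (2 * s) ≤ 1 / 1000 := by linarith
  nlinarith

end planar


section vertical
variable {E : Type*} [NormedAddCommGroup E] [InnerProductSpace ℂ E] [CompleteSpace E]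

lemma hasLen_vert {D : Set E} {P n : E} (hn : ‖n‖ = 1) {ω : ℝ → ℝ} {A R : ℝ} (hA1 : A ≤ 1)
    (h0 : ∀ t ∈ Icc (0:ℝ) 1, 0 ≤ ω t) (hmono : MonotoneOn ω (Icc (0:ℝ) 1))
    (hintg : IntegrableOn (fun t => ω t / t) (Ioc (0:ℝ) A))
    (hI : ∫ t in Ioc (0:ℝ) A, ω t / t ≤ 1 / 2500) (hRA : 8 * R ≤ A)
    (hD : ∀ w : E, ‖w‖ < 4 * R → ω ‖w‖ * ‖w‖ < (inner ℂ n w).re → P + w ∈ D)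
    {δ H : ℝ} (hδ : 0 < δ) (hδH : δ ≤ H) (hHR : 50 * H ≤ R) :
    HasLen D (P + (δ:ℂ) • n) (P + (H:ℂ) • n) (1 / 2 * Real.log (H / δ) + 3 / 100) := by
  have hH : 0 < H := hδ.trans_le hδH
  have hR : 0 < R := by linarith
  have hnn : inner ℂ n n = (1:ℂ) := by
    rw [inner_self_eq_norm_sq_to_K, hn]; simp
  have hopen : IsOpen {z : ℂ | 0 < z.re} := isOpen_lt continuous_const Complex.continuous_re
  have hdiff : DifferentiableOn ℂ (hh ω A) {z : ℂ | 0 < z.re} := by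
    intro z hz
    have := uu_diff hA1 h0 hintg hz
    have h2 : DifferentiableAt ℂ (hh ω A) z := by
      unfold hh
      exact differentiableAt_id.mul ((this.const_mul 25).const_sub 1)
    exact h2.differentiableWithinAt
  have hder : ∀ s : ℝ, 0 < s → HasDerivAt (hh ω A) (deriv (hh ω A) s) (s:ℂ) := by
    intro s hs
    exact (hdiff.differentiableAt (hopen.mem_nhds (by simpa using hs))).hasDerivAt
  have hcont : ContinuousOn (deriv (hh ω A)) {z : ℂ | 0 < z.re} :=
    (hdiff.deriv hopen).continuousOn
  have hreal : ∀ s : ℝ, 0 < s → hh ω A s = (((hh ω A s).re : ℝ) : ℂ) ∧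
      99 / 100 * s ≤ (hh ω A s).re ∧ (hh ω A s).re ≤ s := by
    intro s hs
    obtain ⟨r, hr, hr0⟩ := uu_real hA1 h0 (A := A) hs
    have hn1 := uu_norm hA1 h0 hintg (ζ := (s:ℂ)) (by simpa using hs)
    rw [hr, Complex.norm_real, Real.norm_eq_abs, abs_of_nonneg hr0] at hn1
    have e : hh ω A s = ((s * (1 - 25 * r) : ℝ) : ℂ) := by
      unfold hh; rw [hr]; push_cast; ring
    rw [e, Complex.ofReal_re]
    refine ⟨rfl, by nlinarith, by nlinarith⟩
  have hrc : ∀ a b : ℝ, 0 < a → ContinuousOn (fun s : ℝ => (hh ω A s).re) (Icc a b) := by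
    intro a b ha s hs
    have := (hder s (ha.trans_le hs.1)).continuousAt
    refine ContinuousAt.continuousWithinAt ?_
    exact Complex.continuous_re.continuousAt.comp
      (ContinuousAt.comp (f := fun s : ℝ => (s:ℂ)) this Complex.continuous_ofReal.continuousAt)
  obtain ⟨s0, hs0, hs0'⟩ : ∃ s0 ∈ Icc δ (100 / 99 * δ), (hh ω A s0).re = δ := by
    have := intermediate_value_Icc (show δ ≤ 100 / 99 * δ by linarith) (hrc δ (100 / 99 * δ) hδ)
    apply this
    have h1 := hreal δ hδ
    have h2 := hreal (100 / 99 * δ) (by linarith)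
    exact ⟨h1.2.2, by linarith [h2.2.1]⟩
  have hs0p : 0 < s0 := hδ.trans_le hs0.1
  obtain ⟨s1, hs1, hs1'⟩ : ∃ s1 ∈ Icc s0 (100 / 99 * H), (hh ω A s1).re = H := by
    have := intermediate_value_Icc (show s0 ≤ 100 / 99 * H by linarith [hs0.2])
      (hrc s0 (100 / 99 * H) hs0p)
    apply this
    have h2 := hreal (100 / 99 * H) (by linarith)
    exact ⟨by simp only [hs0']; exact hδH, by linarith [h2.2.1]⟩
  have hs1p : 0 < s1 := hs0p.trans_le hs1.1
  let G : ℂ → E := fun z => P + hh ω A z • n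
  have hball : ∀ z ∈ ball (R:ℂ) R, 0 < z.re ∧ G z ∈ D := by
    intro z hz
    obtain ⟨c1, c2, c3⟩ := hh_cone hA1 h0 hmono hintg hI hRA hz
    refine ⟨c1, hD _ ?_ ?_⟩
    · rw [norm_smul, hn, mul_one]; exact c2
    · rw [norm_smul, hn, mul_one, inner_smul_right, hnn, mul_one]; exact c3
  have hGd : DifferentiableOn ℂ G (ball (R:ℂ) R) := by
    have := hdiff.mono (fun z hz => (hball z hz).1)
    exact (this.smul_const n).const_add P
  have hmem : ∀ s ∈ Icc s0 s1, (s:ℂ) ∈ ball (R:ℂ) R := by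
    intro s hs
    rw [mem_ball, dist_eq_norm, ← Complex.ofReal_sub, Complex.norm_real, Real.norm_eq_abs, abs_lt]
    constructor <;> linarith [hs.1, hs.2, hs1.2]
  have key := HasLen.of_C1 (D := D) hs1.1 (fun s : ℝ => G s) (fun s : ℝ => deriv (hh ω A) s • n)
    (fun s => 1 / (2 * s) + 1 / (2 * R)) ?_ ?_ ?_ ?_ ?_
  · have e0 : G s0 = P + (δ:ℂ) • n := by
      simp only [G]; rw [(hreal s0 hs0p).1, hs0']
    have e1 : G s1 = P + (H:ℂ) • n := by
      simp only [G]; rw [(hreal s1 hs1p).1, hs1']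
    simp only [e0, e1] at key
    refine key.mono ?_
    have hI : ∫ s in s0..s1, (1 / (2 * s) + 1 / (2 * R)) =
        1 / 2 * Real.log (s1 / s0) + (s1 - s0) * (1 / (2 * R)) := by
      rw [intervalIntegral.integral_add]
      · have : (fun s : ℝ => 1 / (2 * s)) = fun s => 1 / 2 * s⁻¹ := by
          ext s; rw [one_div, mul_inv]; ring
        rw [this, intervalIntegral.integral_const_mul, integral_inv_of_pos hs0p hs1p]
        simp
        ring
      · apply ContinuousOn.intervalIntegrable
        intro s hs
        rw [uIcc_of_le hs1.1] at hs
        have : 0 < s := hs0p.trans_le hs.1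
        refine ContinuousAt.continuousWithinAt ?_
        apply ContinuousAt.div (by fun_prop) (by fun_prop)
        linarith
      · simp
    rw [hI]
    have l1 : Real.log (s1 / s0) ≤ Real.log (H / δ) + 1 / 99 := by
      have h1 : s1 / s0 ≤ (H / δ) * (100 / 99) := by
        rw [div_le_iff₀ hs0p]
        have : H / δ * (100 / 99) * s0 ≥ H / δ * (100 / 99) * δ := by
          gcongr; exact hs0.1
        have e : H / δ * (100 / 99) * δ = 100 / 99 * H := by field_simp
        linarith [hs1.2]
      have h2 := Real.log_le_log (by positivity) h1
      rw [Real.log_mul (by positivity) (by norm_num)] at h2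
      have h3 := Real.log_le_sub_one_of_pos (show (0:ℝ) < 100 / 99 by norm_num)
      linarith
    have l2 : (s1 - s0) * (1 / (2 * R)) ≤ 2 / 100 := by
      rw [mul_one_div, div_le_iff₀ (by linarith)]
      linarith [hs1.2]
    linarith
  · intro s hs
    have := (hder s (hs0p.trans_le hs.1)).comp_ofReal
    exact (this.smul_const n).const_add P
  · apply ContinuousOn.smul _ continuousOn_const
    apply hcont.comp Complex.continuous_ofReal.continuousOn
    intro s hs
    simpa using hs0p.trans_le hs.1
  · intro s hs
    have : 0 < s := hs0p.trans_le hs.1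
    refine ContinuousAt.continuousWithinAt ?_
    apply ContinuousAt.add _ continuousAt_const
    apply ContinuousAt.div (by fun_prop) (by fun_prop)
    linarith
  · intro s hs
    exact (hball _ (hmem s hs)).2
  · intro s hs
    apply kob_of_disc G _ (hs0p.trans_le hs.1) (by linarith [hs.2, hs1.2]) hGd
      (fun z hz => (hball z hz).2)
    exact ((hder s (hs0p.trans_le hs.1)).smul_const n).const_add P

/-- horizontal segment -/
lemma hasLen_seg {D : Set E} {x y : E} {c : ℝ}
    (hm : ∀ t ∈ Icc (0:ℝ) 1, x + (t:ℂ) • (y - x) ∈ D)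
    (hk : ∀ t ∈ Icc (0:ℝ) 1, kobMetric D (x + (t:ℂ) • (y - x)) (y - x) ≤ c) :
    HasLen D x y c := by
  have key := HasLen.of_C1 (D := D) zero_le_one (fun s : ℝ => x + (s:ℂ) • (y - x))
    (fun _ => y - x) (fun _ => c) ?_ continuousOn_const continuousOn_const hm hk
  · simpa using key
  · intro t _
    have := (((hasDerivAt_id (t:ℂ)).comp_ofReal).smul_const (y - x)).const_add x
    simpa using this

end vertical


section core
variable {E : Type*} [NormedAddCommGroup E] [InnerProductSpace ℂ E] [CompleteSpace E]

lemma num1 {y : ℝ} (h1 : 1 ≤ y) (h2 : y ≤ 5 / 3) : 3 / 50 + 3 / 5 * y ≤ Real.log (2 * y) := by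
  have h := Real.le_log_one_add_of_nonneg (show 0 ≤ 2 * y - 1 by linarith)
  have e : 1 + (2 * y - 1) = 2 * y := by ring
  rw [e] at h
  refine le_trans ?_ h
  rw [le_div_iff₀ (by linarith)]
  nlinarith

lemma num2 {y : ℝ} (h1 : 1 / 3 ≤ y) (h2 : y ≤ 1) : 3 / 50 + 3 / 5 * y ≤ Real.log (1 + y) := by
  have h := Real.le_log_one_add_of_nonneg (show 0 ≤ y by linarith)
  refine le_trans ?_ h
  rw [le_div_iff₀ (by linarith)]
  nlinarith

lemma ofReal_smul_norm (t : ℝ) (ht : 0 ≤ t) (w : E) : ‖(t:ℂ) • w‖ = t * ‖w‖ := by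
  rw [norm_smul, Complex.norm_real, Real.norm_eq_abs, abs_of_nonneg ht]

lemma re_inner_smul (t : ℝ) (n w : E) : (inner ℂ n ((t:ℂ) • w)).re = t * (inner ℂ n w).re := by
  rw [inner_smul_right, Complex.re_ofReal_mul]

lemma abs_re_inner_le (n w : E) (hn : ‖n‖ = 1) : |(inner ℂ n w).re| ≤ ‖w‖ := by
  have := (Complex.abs_re_le_norm (inner ℂ n w)).trans (norm_inner_le_norm n w)
  rwa [hn, one_mul] at this

lemma seg_short {D : Set E} {p q : E} {δp δq : ℝ} (hδp : 0 < δp) (hpq : δp ≤ δq)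
    (hball : ball q δq ⊆ D) (hd : 3 * ‖p - q‖ ≤ δq) :
    HasLen D p q (Real.log (1 + 2 * ‖p - q‖ / Real.sqrt (δp * δq))) := by
  have hδq : 0 < δq := hδp.trans_le hpq
  set d := ‖p - q‖ with hdd
  have hd0 : 0 ≤ d := norm_nonneg _
  have hseg : HasLen D q p (d / (δq - d)) := by
    have hb : ∀ t ∈ Icc (0:ℝ) 1, ball (q + (t:ℂ) • (p - q)) (δq - d) ⊆ D := by
      intro t ht
      refine Subset.trans ?_ hball
      apply ball_subset_ball'
      rw [dist_eq_norm, add_sub_cancel_left, ofReal_smul_norm t ht.1]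
      nlinarith [ht.2]
    apply hasLen_seg
    · intro t ht
      exact hb t ht (mem_ball_self (by linarith))
    · intro t ht
      exact kob_of_ball (by linarith) (hb t ht)
  refine hseg.symm.mono ?_
  have hS : Real.sqrt (δp * δq) ≤ δq := by
    rw [Real.sqrt_le_left hδq.le]; nlinarith
  have hS0 : 0 < Real.sqrt (δp * δq) := Real.sqrt_pos.2 (by positivity)
  have h1 : Real.log (1 + 2 * d / δq) ≤ Real.log (1 + 2 * d / Real.sqrt (δp * δq)) := by
    apply Real.log_le_log (by positivity)
    gcongr
  refine le_trans ?_ h1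
  have h2 := Real.le_log_one_add_of_nonneg (show 0 ≤ 2 * d / δq by positivity)
  refine le_trans ?_ h2
  have e : 2 * (2 * d / δq) / (2 * d / δq + 2) = 2 * d / (d + δq) := by
    field_simp
  rw [e, div_le_div_iff₀ (by linarith) (by linarith)]
  nlinarith

set_option maxHeartbeats 1000000 in
lemma seg_long {D : Set E} {ξ n0 P Q np nq p q : E} {r : E → ℝ} {r1 δp δq H : ℝ}
    (hn0 : ‖n0‖ = 1) (hnp : ‖np‖ = 1) (hnq : ‖nq‖ = 1)
    (hr : ∀ x ∈ ball ξ r1, ∀ y ∈ ball ξ r1,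
      |r x - r y - (inner ℂ n0 (x - y)).re| ≤ 1 / 1000 * ‖x - y‖)
    (hrD : ∀ x ∈ ball ξ r1, 0 < r x → x ∈ D)
    (hδp : 0 < δp) (hδq : 0 < δq) (hpH : δp ≤ H) (hqH : δq ≤ H)
    (hp : p = P + (δp:ℂ) • np) (hq : q = Q + (δq:ℂ) • nq)
    (hP : P ∈ ball ξ (r1 / 2)) (hQ : Q ∈ ball ξ (r1 / 2)) (hrP : r P = 0) (hrQ : r Q = 0)
    (hnpn : ‖np - n0‖ ≤ 1 / 1000) (hnqn : ‖nq - n0‖ ≤ 1 / 1000)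
    (hH1 : H ≤ 3 * ‖p - q‖) (hH2 : 3 * ‖p - q‖ ≤ 5 * H) (hHr : 50 * H ≤ r1) :
    HasLen D (P + (H:ℂ) • np) (Q + (H:ℂ) • nq) (3 / 5 * (‖p - q‖ / H)) := by
  have hH : 0 < H := hδp.trans_le hpH
  set d := ‖p - q‖ with hd
  have hd0 : 0 < d := by linarith
  have fact : ∀ P ∈ ball ξ (r1 / 2), r P = 0 → ∀ m : E, ‖m‖ = 1 → ‖m - n0‖ ≤ 1 / 1000 →
      ∀ h : ℝ, 0 < h → h ≤ H → P + (h:ℂ) • m ∈ ball ξ (r1 / 2 + H) ∧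
        (1 - 2 / 1000) * h ≤ r (P + (h:ℂ) • m) ∧ r (P + (h:ℂ) • m) ≤ (1 + 1 / 1000) * h := by
    intro P hP hrP m hm hmn h hh hhH
    have hnorm : ‖(h:ℂ) • m‖ = h := by rw [ofReal_smul_norm h hh.le, hm, mul_one]
    have hmem : P + (h:ℂ) • m ∈ ball ξ (r1 / 2 + H) := by
      rw [mem_ball, dist_eq_norm] at hP ⊢
      have e : P + (h:ℂ) • m - ξ = (P - ξ) + (h:ℂ) • m := by abel
      rw [e]
      have := norm_add_le (P - ξ) ((h:ℂ) • m)
      linarith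
    have h1 := hr _ (ball_subset_ball (by linarith) hmem) P (ball_subset_ball (by linarith) hP)
    rw [add_sub_cancel_left, hnorm, hrP, sub_zero, re_inner_smul, abs_le] at h1
    have h2 : (inner ℂ n0 m).re = 1 + (inner ℂ n0 (m - n0)).re := by
      rw [inner_sub_right, inner_self_eq_norm_sq_to_K, hn0]
      simp
    have h3 := (abs_re_inner_le n0 (m - n0) hn0).trans hmn
    have h4 := abs_re_inner_le n0 m hn0
    rw [hm] at h4
    rw [abs_le] at h3 h4
    refine ⟨hmem, by nlinarith [h1.1, h3.1], by nlinarith [h1.2, h4.2]⟩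
  obtain ⟨p1, p2, p3⟩ := fact P hP hrP np hnp hnpn δp hδp hpH
  obtain ⟨q1, q2, q3⟩ := fact Q hQ hrQ nq hnq hnqn δq hδq hqH
  obtain ⟨p1', p2', p3'⟩ := fact P hP hrP np hnp hnpn H hH le_rfl
  obtain ⟨q1', q2', q3'⟩ := fact Q hQ hrQ nq hnq hnqn H hH le_rfl
  rw [← hp] at p1 p2 p3
  rw [← hq] at q1 q2 q3
  set x := P + (H:ℂ) • np with hx
  set y := Q + (H:ℂ) • nq with hy
  have hbig : ball ξ (r1 / 2 + H) ⊆ ball ξ r1 := ball_subset_ball (by linarith)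
  have hrpq := hr p (hbig p1) q (hbig q1)
  set b := (inner ℂ n0 (p - q)).re with hb
  have hproj : ‖(p - q) - (b:ℂ) • n0‖ ≤ d := by
    apply le_of_sq_le_sq _ hd0.le
    have h1 := norm_sub_sq (𝕜 := ℂ) (p - q) ((b:ℂ) • n0)
    have h2 : RCLike.re (inner ℂ (p - q) ((b:ℂ) • n0)) = b * b := by
      change (inner ℂ (p - q) ((b:ℂ) • n0)).re = b * b
      rw [re_inner_smul, ← inner_conj_symm, Complex.conj_re]
    have h3 : ‖(b:ℂ) • n0‖ ^ 2 = b * b := by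
      rw [norm_smul, hn0, Complex.norm_real, mul_one, Real.norm_eq_abs, sq_abs, sq]
    rw [h1, h2, h3]
    nlinarith [mul_self_nonneg b]
  have hbδ : |b - (δp - δq)| ≤ 1 / 1000 * (d + 4 * H) := by
    rw [abs_le] at hrpq ⊢
    constructor <;> nlinarith [hrpq.1, hrpq.2]
  have hxy : ‖y - x‖ ≤ 1019 / 1000 * d := by
    have e : x - y = ((p - q) - (b:ℂ) • n0) + ((b - (δp - δq) : ℝ) : ℂ) • n0 +
        (((H - δp : ℝ) : ℂ) • (np - n0) - ((H - δq : ℝ) : ℂ) • (nq - n0)) := by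
      rw [hx, hy, hp, hq]
      push_cast
      module
    rw [norm_sub_rev, e]
    have t1 := norm_add_le (((p - q) - (b:ℂ) • n0) + ((b - (δp - δq) : ℝ) : ℂ) • n0)
      (((H - δp : ℝ) : ℂ) • (np - n0) - ((H - δq : ℝ) : ℂ) • (nq - n0))
    have t2 := norm_add_le ((p - q) - (b:ℂ) • n0) (((b - (δp - δq) : ℝ) : ℂ) • n0)
    have t3 := norm_sub_le (((H - δp : ℝ) : ℂ) • (np - n0)) (((H - δq : ℝ) : ℂ) • (nq - n0))
    rw [ofReal_smul_norm _ (by linarith), ofReal_smul_norm _ (by linarith)] at t3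
    rw [norm_smul _ n0, hn0, mul_one, Complex.norm_real, Real.norm_eq_abs] at t2
    have t4 : (H - δp) * ‖np - n0‖ ≤ H * (1 / 1000) := by
      apply mul_le_mul _ hnpn (norm_nonneg _) hH.le; linarith
    have t5 : (H - δq) * ‖nq - n0‖ ≤ H * (1 / 1000) := by
      apply mul_le_mul _ hnqn (norm_nonneg _) hH.le; linarith
    linarith
  have hsegm : ∀ t ∈ Icc (0:ℝ) 1, x + (t:ℂ) • (y - x) ∈ ball ξ (r1 / 2 + H) := by
    intro t ht
    have hc := (convex_ball ξ (r1 / 2 + H)).add_smul_sub_mem p1' q1' ht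
    exact hc
  have hdep : ∀ t ∈ Icc (0:ℝ) 1, 99 / 100 * H ≤ r (x + (t:ℂ) • (y - x)) := by
    intro t ht
    set z := x + (t:ℂ) • (y - x) with hz
    have hzm := hbig (hsegm t ht)
    have g1 := hr z hzm x (hbig p1')
    have g2 := hr z hzm y (hbig q1')
    have e1 : z - x = (t:ℂ) • (y - x) := by rw [hz]; abel
    have e2 : z - y = ((-(1 - t) : ℝ) : ℂ) • (y - x) := by
      rw [hz]; push_cast; module
    have e3 : ‖((-(1 - t) : ℝ) : ℂ) • (y - x)‖ = (1 - t) * ‖y - x‖ := by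
      rw [norm_smul, Complex.norm_real, Real.norm_eq_abs, abs_neg, abs_of_nonneg (by linarith [ht.2])]
    rw [e1, re_inner_smul, ofReal_smul_norm t ht.1, abs_le] at g1
    rw [e2, re_inner_smul, e3, abs_le] at g2
    set a := (inner ℂ n0 (y - x)).re
    set N := ‖y - x‖
    have g3 : (1 - t) * (r z - r x - t * a) ≥ (1 - t) * (-(1 / 1000 * (t * N))) :=
      mul_le_mul_of_nonneg_left g1.1 (by linarith [ht.2])
    have g4 : t * (r z - r y - -(1 - t) * a) ≥ t * (-(1 / 1000 * ((1 - t) * N))) :=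
      mul_le_mul_of_nonneg_left g2.1 ht.1
    have g5 : (1 - t) * r x ≥ (1 - t) * ((1 - 2 / 1000) * H) :=
      mul_le_mul_of_nonneg_left p2' (by linarith [ht.2])
    have g6 : t * r y ≥ t * ((1 - 2 / 1000) * H) := mul_le_mul_of_nonneg_left q2' ht.1
    have g7 : t * (1 - t) * N ≤ N :=
      mul_le_of_le_one_left (norm_nonneg _)
        (mul_le_one₀ ht.2 (by linarith [ht.2]) (by linarith [ht.1]))
    have g8 : r z = (1 - t) * r x + t * r y + (1 - t) * (r z - r x - t * a) +
      t * (r z - r y - -(1 - t) * a) := by ring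
    have g9 : r z ≥ (1 - 2 / 1000) * H - 2 / 1000 * (t * (1 - t) * N) := by
      rw [g8]; linarith
    linarith
  apply hasLen_seg
  · intro t ht
    exact hrD _ (hbig (hsegm t ht)) (by linarith [hdep t ht])
  · intro t ht
    have hk := kob_horiz (D := D) (x := x + (t:ℂ) • (y - x)) (v := y - x) (n := n0)
      (T := 99 / 100 * H) (s := 98 / 100 * (99 / 100 * H)) (by linarith) (by linarith) hn0 ?_
    · refine hk.trans ?_
      rw [← mul_div_assoc, div_le_div_iff₀ (by linarith) hH]
      have : ‖y - x‖ * H ≤ 1019 / 1000 * d * H := by gcongr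
      nlinarith [mul_pos hd0 hH]
    · intro w hw1 hw2
      set z := x + (t:ℂ) • (y - x) with hz
      have hzm := hsegm t ht
      have hzw : z + w ∈ ball ξ r1 := by
        rw [mem_ball, dist_eq_norm] at hzm ⊢
        have e : z + w - ξ = (z - ξ) + w := by abel
        rw [e]
        have := norm_add_le (z - ξ) w
        linarith
      apply hrD _ hzw
      have g1 := hr (z + w) hzw z (hbig hzm)
      rw [add_sub_cancel_left, abs_le] at g1
      have := hdep t ht
      linarith [g1.1]

lemma core {D : Set E} {ξ n0 P Q np nq p q : E} {r : E → ℝ} {r1 R δp δq : ℝ}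
    (hn0 : ‖n0‖ = 1) (hnp : ‖np‖ = 1) (hnq : ‖nq‖ = 1)
    (hr : ∀ x ∈ ball ξ r1, ∀ y ∈ ball ξ r1,
      |r x - r y - (inner ℂ n0 (x - y)).re| ≤ 1 / 1000 * ‖x - y‖)
    (hrD : ∀ x ∈ ball ξ r1, 0 < r x → x ∈ D)
    (hδp : 0 < δp) (hpq : δp ≤ δq) (hlip : δq ≤ δp + ‖p - q‖)
    (hp : p = P + (δp:ℂ) • np) (hq : q = Q + (δq:ℂ) • nq)
    (hP : P ∈ ball ξ (r1 / 2)) (hQ : Q ∈ ball ξ (r1 / 2)) (hrP : r P = 0) (hrQ : r Q = 0)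
    (hnpn : ‖np - n0‖ ≤ 1 / 1000) (hnqn : ‖nq - n0‖ ≤ 1 / 1000)
    (hball : ball q δq ⊆ D)
    (hvp : ∀ H, δp ≤ H → 50 * H ≤ R →
      HasLen D p (P + (H:ℂ) • np) (1 / 2 * Real.log (H / δp) + 3 / 100))
    (hvq : ∀ H, δq ≤ H → 50 * H ≤ R →
      HasLen D q (Q + (H:ℂ) • nq) (1 / 2 * Real.log (H / δq) + 3 / 100))
    (hRr : R ≤ r1) (hδR : 50 * δq ≤ R) (hdR : 50 * ‖p - q‖ ≤ R) :
    HasLen D p q (Real.log (1 + 2 * ‖p - q‖ / Real.sqrt (δp * δq))) := by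
  by_cases hd : 3 * ‖p - q‖ ≤ δq
  · exact seg_short hδp hpq hball hd
  push Not at hd
  have hδq : 0 < δq := hδp.trans_le hpq
  obtain ⟨H, hHq, hHd, hHm⟩ : ∃ H, δq ≤ H ∧ 3 * ‖p - q‖ ≤ 5 * H ∧
      (H = δq ∨ H = 3 / 5 * ‖p - q‖) := by
    rcases le_total δq (3 / 5 * ‖p - q‖) with h | h
    · exact ⟨3 / 5 * ‖p - q‖, h, by linarith, Or.inr rfl⟩
    · exact ⟨δq, le_rfl, by linarith, Or.inl rfl⟩
  have hH : 0 < H := hδq.trans_le hHq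
  have hHR : 50 * H ≤ R := by rcases hHm with h | h <;> linarith [norm_nonneg (p - q)]
  have hH3 : H ≤ 3 * ‖p - q‖ := by rcases hHm with h | h <;> linarith [norm_nonneg (p - q)]
  have s1 := hvp H (hpq.trans hHq) hHR
  have s2 := seg_long hn0 hnp hnq hr hrD hδp hδq (hpq.trans hHq) hHq hp hq hP hQ hrP hrQ hnpn hnqn
    hH3 hHd (by linarith)
  have s3 := hvq H hHq hHR
  refine ((s1.trans s2).trans s3.symm).mono ?_
  set d := ‖p - q‖
  have hd0 : 0 < d := by linarith
  set S := Real.sqrt (δp * δq) with hS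
  have hS0 : 0 < S := Real.sqrt_pos.2 (by positivity)
  have hlogS : Real.log S = 1 / 2 * (Real.log δp + Real.log δq) := by
    rw [hS, Real.log_sqrt (by positivity), Real.log_mul hδp.ne' hδq.ne']; ring
  have e1 : 1 + 2 * d / S = (S + 2 * d) / S := by field_simp
  rw [e1, Real.log_div (by positivity) hS0.ne', hlogS, Real.log_div hH.ne' hδp.ne',
    Real.log_div hH.ne' hδq.ne']
  suffices h : 3 / 50 + 3 / 5 * (d / H) ≤ Real.log ((S + 2 * d) / H) by
    rw [Real.log_div (by positivity) hH.ne'] at h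
    linarith
  by_cases hy : 1 ≤ d / H
  · refine (num1 hy ?_).trans ?_
    · rw [div_le_iff₀ hH]; linarith
    · apply Real.log_le_log (by positivity)
      rw [← mul_div_assoc]
      gcongr
      linarith
  · push Not at hy
    have hy' := hy
    rw [div_lt_one hH] at hy'
    have hHeq : H = δq := by
      rcases hHm with h | h
      · exact h
      · exfalso; linarith
    have hSp : δp ≤ S := by
      rw [hS]; apply Real.le_sqrt_of_sq_le; nlinarith
    refine (num2 ?_ hy.le).trans ?_
    · rw [le_div_iff₀ hH]; linarith
    · apply Real.log_le_log (by positivity)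
      rw [le_div_iff₀ hH, add_mul, div_mul_cancel₀ _ hH.ne']
      linarith

end core

section geom
variable {E : Type*} [NormedAddCommGroup E] [InnerProductSpace ℂ E]

lemma riesz_real [CompleteSpace E] (l : E →L[ℝ] ℝ) (hl : ‖l‖ = 1) :
    ∃ n : E, ‖n‖ = 1 ∧ ∀ w, l w = -(inner ℂ n w).re := by
  refine ⟨-(InnerProductSpace.toDual ℂ E).symm (StrongDual.extendRCLike (𝕜 := ℂ) l), ?_, ?_⟩
  · rw [norm_neg, LinearIsometryEquiv.norm_map, StrongDual.norm_extendRCLike, hl]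
  · intro w
    rw [inner_neg_left, InnerProductSpace.toDual_symm_apply, Complex.neg_re, neg_neg]
    exact (StrongDual.re_extendRCLike_apply (𝕜 := ℂ) l w).symm

lemma line_deriv {ρ : E → ℝ} {P w : E} {f' : E →L[ℝ] ℝ} {s : ℝ}
    (h : HasFDerivAt ρ f' (P + s • w)) :
    HasDerivAt (fun t : ℝ => ρ (P + t • w)) (f' w) s := by
  have h1 : HasDerivAt (fun t : ℝ => P + t • w) w s := by
    simpa using ((hasDerivAt_id s).smul_const w).const_add P
  exact h.comp_hasDerivAt s h1

lemma norm_ofReal_smul_sub {n : E} (hn : ‖n‖ = 1) {δ : ℝ} (hδ : 0 < δ) {w : E} {t : ℝ}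
    (ht : 0 < t) (h : t * ‖w‖ ^ 2 < 2 * δ * (inner ℂ n w).re) :
    ‖t • w - (δ : ℂ) • n‖ < δ := by
  have h1 : ‖t • w - (δ : ℂ) • n‖ ^ 2 = (t * ‖w‖) ^ 2 - 2 * (t * δ * (inner ℂ n w).re) + δ ^ 2 := by
    have : (t • w : E) = (t : ℂ) • w := (Complex.coe_smul t w).symm
    rw [this, @norm_sub_sq ℂ, norm_smul, norm_smul, hn, inner_smul_left, inner_smul_right]
    have hsy : (inner ℂ w n).re = (inner ℂ n w).re := inner_re_symm (𝕜 := ℂ) w n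
    simp [abs_of_pos ht, abs_of_pos hδ, hsy]
    ring
  refine lt_of_pow_lt_pow_left₀ 2 hδ.le ?_
  rw [h1]
  nlinarith [mul_lt_mul_of_pos_left h ht]

lemma normal_eq {D W : Set E} {ρ : E → ℝ} (hW : IsOpen W) {P n : E} (hPW : P ∈ W)
    (hdiff : DifferentiableAt ℝ ρ P) (hne : fderiv ℝ ρ P ≠ 0)
    (hDW : ∀ x ∈ W, x ∈ D → ρ x < 0) (hP0 : ρ P = 0)
    (hn : ‖n‖ = 1) {δ : ℝ} (hδ : 0 < δ) (hball : ball (P + (δ : ℂ) • n) δ ⊆ D) (w : E) :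
    ((‖fderiv ℝ ρ P‖)⁻¹ • fderiv ℝ ρ P) w = -(inner ℂ n w).re := by
  set f' := fderiv ℝ ρ P with hf'
  have key : ∀ w : E, 0 < (inner ℂ n w).re → f' w ≤ 0 := by
    intro w hw
    have hd : HasDerivAt (fun t : ℝ => ρ (P + t • w)) (f' w) 0 := by
      apply line_deriv
      simpa using hdiff.hasFDerivAt
    have hs := hd.tendsto_slope_zero_right
    refine le_of_tendsto hs ?_
    have hc : Continuous (fun t : ℝ => P + t • w) := by fun_prop
    have e1 : ∀ᶠ t in 𝓝[>] (0:ℝ), P + t • w ∈ W :=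
      nhdsWithin_le_nhds (hc.continuousAt.eventually (by simpa using hW.mem_nhds hPW))
    have hc2 : Continuous (fun t : ℝ => t * ‖w‖ ^ 2) := by fun_prop
    have e2 : ∀ᶠ t in 𝓝[>] (0:ℝ), t * ‖w‖ ^ 2 < 2 * δ * (inner ℂ n w).re :=
      nhdsWithin_le_nhds (hc2.continuousAt.eventually_lt_const (by simp; positivity))
    filter_upwards [e1, e2, self_mem_nhdsWithin] with t h1 h2 h3
    have h3 : 0 < t := h3
    have hD : P + t • w ∈ D := by
      apply hball
      rw [mem_ball, dist_eq_norm]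
      have := norm_ofReal_smul_sub hn hδ h3 h2
      rwa [add_sub_add_left_eq_sub]
    have := hDW _ h1 hD
    simp only [zero_add, zero_smul, add_zero, hP0, sub_zero, smul_eq_mul]
    exact mul_nonpos_of_nonneg_of_nonpos (by positivity) this.le
  have hnn : (inner ℂ n n).re = 1 := by
    have := @inner_self_eq_norm_sq ℂ E _ _ _ n
    simp only [RCLike.re_to_complex] at this
    rw [this, hn]; norm_num
  have hz : ∀ w : E, (inner ℂ n w).re = 0 → f' w ≤ 0 := by
    intro w hw
    have h1 : ∀ e : ℝ, 0 < e → f' w ≤ e * (-(f' n)) := by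
      intro e he
      have := key (w + (e : ℂ) • n) (by rw [inner_add_right, inner_smul_right]; simp [hw, hn, he])
      rw [map_add, Complex.coe_smul, map_smul, smul_eq_mul] at this
      linarith
    by_contra hcon
    push Not at hcon
    by_cases hk : -(f' n) ≤ 0
    · have := h1 1 one_pos; linarith
    · push Not at hk
      have := h1 (f' w / 2 / (-(f' n))) (by positivity)
      rw [div_mul_cancel₀ _ hk.ne'] at this
      linarith
  have hform : ∀ w : E, f' w = (inner ℂ n w).re * f' n := by
    intro w
    have hv : (inner ℂ n (w - (((inner ℂ n w).re : ℝ) : ℂ) • n)).re = 0 := by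
      rw [inner_sub_right, inner_smul_right]; simp [hn]
    have h1 := hz _ hv
    have h2 := hz (-(w - (((inner ℂ n w).re : ℝ) : ℂ) • n)) (by rw [inner_neg_right, Complex.neg_re, hv, neg_zero])
    rw [map_neg] at h2
    have h3 : f' (w - (((inner ℂ n w).re : ℝ) : ℂ) • n) = 0 := by linarith
    rw [map_sub, Complex.coe_smul, map_smul, smul_eq_mul] at h3
    linarith
  have hfn : f' n ≤ 0 := key n (by rw [hnn]; norm_num)
  have hnorm : ‖f'‖ = -(f' n) := by
    apply le_antisymm
    · refine ContinuousLinearMap.opNorm_le_bound _ (by linarith) (fun x => ?_)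
      rw [hform x, Real.norm_eq_abs, abs_mul, abs_of_nonpos hfn, mul_comm]
      refine mul_le_mul_of_nonneg_left ?_ (by linarith)
      calc |(inner ℂ n x).re| ≤ ‖inner ℂ n x‖ := Complex.abs_re_le_norm _
        _ ≤ ‖n‖ * ‖x‖ := norm_inner_le_norm _ _
        _ = ‖x‖ := by rw [hn, one_mul]
    · have := f'.le_opNorm n
      rw [hn, mul_one, Real.norm_eq_abs] at this
      exact (neg_le_abs _).trans this
  have hpos : 0 < ‖f'‖ := norm_pos_iff.2 hne
  rw [smul_apply, smul_eq_mul, hform w]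
  have : f' n = -‖f'‖ := by linarith
  rw [this]
  field_simp

lemma cone_mem {D W : Set E} {ρ : E → ℝ} {ω : ℝ → ℝ} {P n w : E} {ρ0 : ℝ}
    (hdiff : ∀ x ∈ W, DifferentiableAt ℝ ρ x) (hne : ∀ x ∈ W, fderiv ℝ ρ x ≠ 0)
    (hDW : D ∩ W = {x ∈ W | ρ x < 0}) (hFW : frontier D ∩ W = {x ∈ W | ρ x = 0})
    (hmono : MonotoneOn ω (Icc (0:ℝ) 1))
    (hdini : ∀ x ∈ frontier D ∩ W, ∀ y ∈ frontier D ∩ W, ‖x - y‖ ≤ 1 →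
      ‖(‖fderiv ℝ ρ x‖)⁻¹ • fderiv ℝ ρ x - (‖fderiv ℝ ρ y‖)⁻¹ • fderiv ℝ ρ y‖ ≤ ω ‖x - y‖)
    (hP : P ∈ frontier D ∩ W) (hbW : ball P ρ0 ⊆ W) (hρ0 : ρ0 ≤ 1)
    (hN : ∀ w, ((‖fderiv ℝ ρ P‖)⁻¹ • fderiv ℝ ρ P) w = -(inner ℂ n w).re)
    (hw : ‖w‖ < ρ0) (hc : ω ‖w‖ * ‖w‖ < (inner ℂ n w).re) : P + w ∈ D := by
  have hin : ∀ s ∈ Icc (0:ℝ) 1, P + s • w ∈ W := by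
    intro s hs
    apply hbW
    rw [mem_ball, dist_eq_norm, add_sub_cancel_left, norm_smul, Real.norm_eq_abs, abs_of_nonneg hs.1]
    have := mul_le_of_le_one_left (norm_nonneg w) hs.2
    linarith
  have hder : ∀ s ∈ Icc (0:ℝ) 1,
      HasDerivAt (fun t : ℝ => ρ (P + t • w)) (fderiv ℝ ρ (P + s • w) w) s :=
    fun s hs => line_deriv (hdiff _ (hin s hs)).hasFDerivAt
  have hneg : ∀ s ∈ Icc (0:ℝ) 1, ρ (P + s • w) = 0 → fderiv ℝ ρ (P + s • w) w < 0 := by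
    intro s hs h0
    have hy : P + s • w ∈ frontier D ∩ W := by rw [hFW]; exact ⟨hin s hs, h0⟩
    have hle : s * ‖w‖ ≤ ‖w‖ := mul_le_of_le_one_left (norm_nonneg w) hs.2
    have hno : ‖P + s • w - P‖ = s * ‖w‖ := by
      rw [add_sub_cancel_left, norm_smul, Real.norm_eq_abs, abs_of_nonneg hs.1]
    have h1 := hdini _ hy _ hP (by rw [hno]; linarith)
    rw [hno] at h1
    have h2 : ω (s * ‖w‖) ≤ ω ‖w‖ :=
      hmono ⟨mul_nonneg hs.1 (norm_nonneg w), by linarith⟩ ⟨norm_nonneg w, by linarith⟩ hle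
    have h3 := ((‖fderiv ℝ ρ (P + s • w)‖)⁻¹ • fderiv ℝ ρ (P + s • w)
      - (‖fderiv ℝ ρ P‖)⁻¹ • fderiv ℝ ρ P).le_of_opNorm_le (h1.trans h2) w
    rw [sub_apply, hN w, smul_apply, smul_eq_mul] at h3
    have h4 := (le_abs_self _).trans h3
    have hpos : 0 < ‖fderiv ℝ ρ (P + s • w)‖ := norm_pos_iff.2 (hne _ (hin s hs))
    have h5 : (‖fderiv ℝ ρ (P + s • w)‖)⁻¹ * fderiv ℝ ρ (P + s • w) w < 0 := by linarith
    by_contra hcon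
    push Not at hcon
    exact absurd h5 (not_lt.2 (mul_nonneg (inv_nonneg.2 hpos.le) hcon))
  have hP0 : ρ P = 0 := by rw [hFW] at hP; exact hP.2
  have hle : ∀ ⦃s⦄, s ∈ Icc (0:ℝ) 1 → ρ (P + s • w) ≤ (fun _ => (0:ℝ)) s :=
    image_le_of_deriv_right_lt_deriv_boundary' (B := fun _ => 0) (B' := fun _ => 0)
      (fun s hs => (hder s hs).continuousAt.continuousWithinAt)
      (fun s hs => (hder s ⟨hs.1, hs.2.le⟩).hasDerivWithinAt)
      (by simp [hP0]) continuousOn_const (fun _ _ => hasDerivWithinAt_const _ _ _)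
      (fun s hs h0 => hneg s ⟨hs.1, hs.2.le⟩ h0)
  have h1m : (1:ℝ) ∈ Icc (0:ℝ) 1 := by simp
  have hlt : ρ (P + (1:ℝ) • w) < 0 := by
    rcases lt_or_eq_of_le (hle h1m) with h | h
    · exact h
    · exfalso
      have hd := hder 1 h1m
      have hn' := hneg 1 h1m h
      have hs := hd.tendsto_slope_zero_left
      have ev := hs.eventually_lt_const hn'
      have ev2 : ∀ᶠ t in 𝓝[<] (0:ℝ), -1 < t := nhdsWithin_le_nhds (lt_mem_nhds (by norm_num))
      obtain ⟨t, ⟨ht1, ht2⟩, ht3⟩ := ((ev.and ev2).and self_mem_nhdsWithin).exists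
      have ht3 : t < 0 := ht3
      have := hle (show 1 + t ∈ Icc (0:ℝ) 1 from ⟨by linarith, by linarith⟩)
      simp only at this h
      rw [h, sub_zero, smul_eq_mul] at ht1
      exact absurd ht1 (not_lt.2 (mul_nonneg_of_nonpos_of_nonpos (inv_nonpos.2 ht3.le) this))
  rw [one_smul] at hlt
  have hm : P + w ∈ D ∩ W := by
    rw [hDW]; exact ⟨by simpa using hin 1 h1m, hlt⟩
  exact hm.1

lemma ball_bdist_subset {D : Set E} (hD : IsOpen D) {p : E} (hp : p ∈ D) :
    ball p (bdist D p) ⊆ D := by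
  rcases (ball p (bdist D p)).eq_empty_or_nonempty with h | h
  · rw [h]; exact empty_subset _
  have hpos : 0 < bdist D p := nonempty_ball.1 h
  have hdis : Disjoint (ball p (bdist D p)) (frontier D) := disjoint_ball_infDist
  have hpre : IsPreconnected (ball p (bdist D p)) := by
    exact (convex_ball p _).isPreconnected
  refine hpre.subset_left_of_subset_union hD (isOpen_compl_iff.2 (isClosed_closure (s := D)))
    (disjoint_compl_right.mono_right (compl_subset_compl.2 subset_closure)) ?_
    ⟨p, mem_ball_self hpos, hp⟩
  intro x hx
  by_cases hxc : x ∈ closure D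
  · left
    by_contra hxD
    exact disjoint_left.1 hdis hx ⟨hxc, by rwa [hD.interior_eq]⟩
  · right; exact hxc

end geom


section final
variable {E : Type*} [NormedAddCommGroup E] [InnerProductSpace ℂ E] [ProperSpace E]

lemma foot {D : Set E} (hD : IsOpen D) {ξ : E} (hξ : ξ ∈ frontier D) {p : E} (hp : p ∈ D) :
    0 < bdist D p ∧ bdist D p ≤ ‖p - ξ‖ ∧ ∃ P ∈ frontier D, ∃ n : E, ‖n‖ = 1 ∧
      p = P + ((bdist D p : ℝ) : ℂ) • n ∧ ‖p - P‖ = bdist D p := by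
  have hne : (frontier D).Nonempty := ⟨ξ, hξ⟩
  have hpf : p ∉ frontier D := fun h => by
    rw [hD.frontier_eq] at h; exact h.2 hp
  have hpos : 0 < bdist D p := (isClosed_frontier.notMem_iff_infDist_pos hne).1 hpf
  refine ⟨hpos, ?_, ?_⟩
  · rw [← dist_eq_norm]; exact infDist_le_dist_of_mem hξ
  · obtain ⟨P, hP, h⟩ := isClosed_frontier.exists_infDist_eq_dist hne p
    have hn : ‖p - P‖ = bdist D p := by rw [← dist_eq_norm, ← h]; rfl
    refine ⟨P, hP, (((bdist D p)⁻¹ : ℝ) : ℂ) • (p - P), ?_, ?_, hn⟩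
    · rw [ofReal_smul_norm _ (inv_nonneg.2 hpos.le), hn, inv_mul_cancel₀ hpos.ne']
    · rw [smul_smul, ← Complex.ofReal_mul, mul_inv_cancel₀ hpos.ne', Complex.ofReal_one, one_smul]
      abel

lemma exists_small_dini {ω : ℝ → ℝ} (hintg : IntegrableOn (fun t => ω t / t) (Ioc (0:ℝ) 1)) :
    ∃ A, 0 < A ∧ A ≤ 1 ∧ ∫ t in Ioc 0 A, ω t / t ≤ 1 / 2500 := by
  have hc := intervalIntegral.continuousOn_primitive
    ((integrableOn_Icc_iff_integrableOn_Ioc).2 hintg)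
  have h0 := (hc 0 (by simp)).eventually_lt_const
    (show (∫ t in Ioc (0:ℝ) 0, ω t / t) < 1 / 2500 by simp)
  have h1 : ∀ᶠ x in 𝓝[>] (0:ℝ), x ∈ Icc (0:ℝ) 1 := by
    filter_upwards [Ioc_mem_nhdsGT (show (0:ℝ) < 1 by norm_num)] with x hx
    exact ⟨hx.1.le, hx.2⟩
  have h2 : ∀ᶠ x in 𝓝[>] (0:ℝ), (∫ t in Ioc (0:ℝ) x, ω t / t) < 1 / 2500 := by
    have := eventually_nhdsWithin_iff.1 h0
    filter_upwards [nhdsWithin_le_nhds this, h1] with x hx hx1 using hx hx1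
  obtain ⟨A, ⟨hA1, hA2⟩, hA3⟩ := ((h1.and h2).and self_mem_nhdsWithin).exists
  exact ⟨A, hA3, hA1.2, hA2.le⟩

lemma normal_close {l m : E →L[ℝ] ℝ} {a b : E} {c : ℝ} (hla : ∀ w, l w = -(inner ℂ a w).re)
    (hmb : ∀ w, m w = -(inner ℂ b w).re) (h : ‖l - m‖ ≤ c) : ‖a - b‖ ≤ c := by
  have h1 : (m - l) (a - b) = ‖a - b‖ ^ 2 := by
    rw [sub_apply, hla, hmb]
    have := @inner_self_eq_norm_sq ℂ E _ _ _ (a - b)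
    rw [← this, inner_sub_left]
    simp only [RCLike.re_to_complex, Complex.sub_re]
    ring
  have h2 : ‖a - b‖ ^ 2 ≤ c * ‖a - b‖ := by
    rw [← h1]
    refine (le_abs_self _).trans ((m - l).le_of_opNorm_le ?_ _)
    rwa [norm_sub_rev]
  rcases (norm_nonneg (a - b)).eq_or_lt with h0 | h0
  · rw [← h0]; exact (norm_nonneg _).trans h
  · rw [sq] at h2; exact le_of_mul_le_mul_right h2 h0

theorem main_generic {D : Set E} (hD : IsOpen D) {ξ : E} (hξ : ξ ∈ frontier D)
    (hd : DiniSmoothBoundaryPoint D ξ) :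
    ∃ U : Set E, IsOpen U ∧ ξ ∈ U ∧ ∀ p ∈ D ∩ U, ∀ q ∈ D ∩ U,
      kobDist D p q ≤ Real.log (1 + 2 * ‖p - q‖ / Real.sqrt (bdist D p * bdist D q)) := by
  obtain ⟨W, ρ, ω, ⟨hWo, hξW, hρ, hne, hDW, hFW⟩, h0, hmono, hintg, hdini⟩ := hd
  have hcd : ∀ x ∈ W, ContDiffAt ℝ 1 ρ x := fun x hx => hρ.contDiffAt (hWo.mem_nhds hx)
  have hdiff : ∀ x ∈ W, DifferentiableAt ℝ ρ x := fun x hx =>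
    (hcd x hx).differentiableAt (by norm_num)
  have hstr : HasStrictFDerivAt ρ (fderiv ℝ ρ ξ) ξ :=
    (hcd ξ hξW).hasStrictFDerivAt (by norm_num)
  set f' := fderiv ℝ ρ ξ with hf'
  have hfpos : 0 < ‖f'‖ := norm_pos_iff.2 (hne ξ hξW)
  obtain ⟨n0, hn0, hN0⟩ := riesz_real (‖f'‖⁻¹ • f') (by
    rw [norm_smul, norm_inv, norm_norm, inv_mul_cancel₀ hfpos.ne'])
  obtain ⟨r1, hr1, hr1W, hr⟩ : ∃ r1 > 0, ball ξ r1 ⊆ W ∧ ∀ x ∈ ball ξ r1, ∀ y ∈ ball ξ r1,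
      |ρ x - ρ y - f' (x - y)| ≤ ‖f'‖ / 1000 * ‖x - y‖ := by
    have h1 := hstr.isLittleO.def (show 0 < ‖f'‖ / 1000 by positivity)
    obtain ⟨ra, hra, h2⟩ := Metric.eventually_nhds_iff.1 h1
    obtain ⟨rb, hrb, h3⟩ := Metric.isOpen_iff.1 hWo ξ hξW
    refine ⟨min ra rb, lt_min hra hrb, (ball_subset_ball (min_le_right _ _)).trans h3, ?_⟩
    intro x hx y hy
    have := @h2 (x, y) (by
      rw [Prod.dist_eq]
      exact max_lt (lt_of_lt_of_le hx (min_le_left _ _)) (lt_of_lt_of_le hy (min_le_left _ _)))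
    simpa using this
  set r : E → ℝ := fun x => -(ρ x) / ‖f'‖ with hrdef
  have hr' : ∀ x ∈ ball ξ r1, ∀ y ∈ ball ξ r1,
      |r x - r y - (inner ℂ n0 (x - y)).re| ≤ 1 / 1000 * ‖x - y‖ := by
    intro x hx y hy
    have h1 := hN0 (x - y)
    rw [smul_apply, smul_eq_mul] at h1
    have h2 : r x - r y - (inner ℂ n0 (x - y)).re
        = -(‖f'‖⁻¹ * (ρ x - ρ y - f' (x - y))) := by
      have : (inner ℂ n0 (x - y)).re = -(‖f'‖⁻¹ * f' (x - y)) := by linarith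
      rw [this, hrdef]
      simp only
      field_simp
      ring
    rw [h2, abs_neg, abs_mul, abs_of_pos (inv_pos.2 hfpos), inv_mul_le_iff₀ hfpos]
    have := hr x hx y hy
    linarith
  have hrD : ∀ x ∈ ball ξ r1, 0 < r x → x ∈ D := by
    intro x hx h
    have : ρ x < 0 := by
      by_contra hcon
      push Not at hcon
      exact absurd h (not_lt.2 (div_nonpos_of_nonpos_of_nonneg (by linarith) hfpos.le))
    have hm : x ∈ D ∩ W := by rw [hDW]; exact ⟨hr1W hx, this⟩
    exact hm.1
  obtain ⟨A, hA, hA1, hI⟩ := exists_small_dini hintg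
  obtain ⟨R, hR, hRA, hRr⟩ : ∃ R > 0, 8 * R ≤ A ∧ 8 * R ≤ r1 :=
    ⟨min A r1 / 8, by positivity, by linarith [min_le_left A r1], by linarith [min_le_right A r1]⟩
  have hξF : ξ ∈ frontier D ∩ W := ⟨hξ, hξW⟩
  have hintA : IntegrableOn (fun t => ω t / t) (Ioc (0:ℝ) A) :=
    hintg.mono_set (Ioc_subset_Ioc_right hA1)
  have data : ∀ p ∈ D, ‖p - ξ‖ < R / 200 → ∃ P n : E, ‖n‖ = 1 ∧
      p = P + ((bdist D p : ℝ) : ℂ) • n ∧ P ∈ ball ξ (r1 / 2) ∧ r P = 0 ∧ ‖n - n0‖ ≤ 1 / 1000 ∧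
      ∀ H, bdist D p ≤ H → 50 * H ≤ R →
        HasLen D p (P + (H:ℂ) • n) (1 / 2 * Real.log (H / bdist D p) + 3 / 100) := by
    intro p hp hpξ
    obtain ⟨hpos, hle, P, hP, n, hn, hpe, hpP⟩ := foot hD hξ hp
    have hPξ : ‖P - ξ‖ < R / 100 := by
      calc ‖P - ξ‖ = ‖(p - ξ) - (p - P)‖ := by congr 1; abel
        _ ≤ ‖p - ξ‖ + ‖p - P‖ := norm_sub_le _ _
        _ < R / 100 := by rw [hpP]; linarith
    have hPb : P ∈ ball ξ (r1 / 2) := by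
      rw [mem_ball, dist_eq_norm]; linarith
    have hPW : P ∈ W := hr1W (ball_subset_ball (by linarith) hPb)
    have hPF : P ∈ frontier D ∩ W := ⟨hP, hPW⟩
    have hP0 : ρ P = 0 := by
      have := hPF; rw [hFW] at this; exact this.2
    have hball : ball (P + ((bdist D p : ℝ) : ℂ) • n) (bdist D p) ⊆ D := by
      rw [← hpe]; exact ball_bdist_subset hD hp
    have hDW' : ∀ x ∈ W, x ∈ D → ρ x < 0 := by
      intro x hx hxD
      have hm : x ∈ D ∩ W := ⟨hxD, hx⟩
      rw [hDW] at hm; exact hm.2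
    have hN := normal_eq hWo hPW (hdiff P hPW) (hne P hPW) hDW' hP0 hn hpos hball
    refine ⟨P, n, hn, hpe, hPb, by simp [hrdef, hP0], ?_, ?_⟩
    · refine normal_close hN hN0 ?_
      refine (hdini P hPF ξ hξF (by linarith)).trans ?_
      have h1 : ω ‖P - ξ‖ ≤ ω R :=
        hmono ⟨norm_nonneg _, by linarith⟩ ⟨hR.le, by linarith⟩ (by linarith)
      have h2 : ω R ≤ 2 * ∫ t in Ioc 0 A, ω t / t :=
        om_small hA1 h0 hmono hintA hR (by linarith)
      linarith
    · intro H hH hHR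
      have hbW : ball P (4 * R) ⊆ W := by
        refine Subset.trans (ball_subset_ball' ?_) hr1W
        rw [dist_eq_norm]; linarith
      have := hasLen_vert (D := D) (P := P) hn hA1 h0 hmono hintA hI hRA
        (fun w hw hc => cone_mem hdiff hne hDW hFW hmono hdini hPF hbW (by linarith) hN hw hc)
        hpos hH hHR
      rwa [← hpe] at this
  have half : ∀ p ∈ D, ‖p - ξ‖ < R / 200 → ∀ q ∈ D, ‖q - ξ‖ < R / 200 →
      bdist D p ≤ bdist D q →
      HasLen D p q (Real.log (1 + 2 * ‖p - q‖ / Real.sqrt (bdist D p * bdist D q))) := by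
    intro p hp hpξ q hq hqξ hpq
    obtain ⟨P, np, hnp, hpe, hPb, hP0, hnpn, hvp⟩ := data p hp hpξ
    obtain ⟨Q, nq, hnq, hqe, hQb, hQ0, hnqn, hvq⟩ := data q hq hqξ
    obtain ⟨hpos, -, -⟩ := foot hD hξ hp
    obtain ⟨-, hqle, -⟩ := foot hD hξ hq
    have hlip : bdist D q ≤ bdist D p + ‖p - q‖ := by
      rw [← dist_eq_norm, dist_comm]; exact infDist_le_infDist_add_dist
    have hdR : ‖p - q‖ < R / 100 := by
      calc ‖p - q‖ = ‖(p - ξ) - (q - ξ)‖ := by congr 1; abel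
        _ ≤ ‖p - ξ‖ + ‖q - ξ‖ := norm_sub_le _ _
        _ < R / 100 := by linarith
    exact core hn0 hnp hnq hr' hrD hpos hpq hlip hpe hqe hPb hQb hP0 hQ0 hnpn hnqn
      (ball_bdist_subset hD hq) hvp hvq (by linarith) (by linarith) (by linarith)
  refine ⟨ball ξ (R / 200), isOpen_ball, mem_ball_self (by positivity), ?_⟩
  rintro p ⟨hp, hpb⟩ q ⟨hq, hqb⟩
  rw [mem_ball, dist_eq_norm] at hpb hqb
  rcases le_total (bdist D p) (bdist D q) with h | h
  · exact (half p hp hpb q hq hqb h).kobDist_le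
  · have := (half q hq hqb p hp hpb h).symm.kobDist_le
    rwa [norm_sub_rev, mul_comm (bdist D q)] at this

end final


theorem statement_17 {n : ℕ}
    (Ω : Set (EuclideanSpace ℂ (Fin n)))
    (hΩo : IsOpen Ω) (hΩc : IsConnected Ω) (hΩb : Bornology.IsBounded Ω)
    (ξ : EuclideanSpace ℂ (Fin n)) (hξ : ξ ∈ frontier Ω)
    (hdini : DiniSmoothBoundaryPoint Ω ξ) :
    ∃ U : Set (EuclideanSpace ℂ (Fin n)), IsOpen U ∧ ξ ∈ U ∧
      ∀ p ∈ Ω ∩ U, ∀ q ∈ Ω ∩ U,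
        kobDist Ω p q ≤
          Real.log (1 + 2 * ‖p - q‖ / Real.sqrt (bdist Ω p * bdist Ω q)) := by
  exact main_generic hΩo hξ hdini
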